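/- Let p_i, p_j, p_k be distinct odd primes and M = p_i^2 p_j^2 p_k^2. Suppose A, B ⊆ ℤ_M satisfy A ⊕ B = ℤ_M and |A| = |B| = p_i p_j p_k. Then both A and B satisfy the Coven–Meyerowitz condition (T2). -/

import Mathlib

open Polynomial

/-- The mask polynomial `A(X) = Σ_{a ∈ A} X^a` of a finite subset of `ZMod M`,
using the representatives in `{0, …, M-1}`. -/
noncomputable def maskPoly (M : ℕ) (A : Finset (ZMod M)) : Polynomial ℤ :=
  ∑ a ∈ A, X ^ a.val

/-- `Φ_s | A` : the `s`-th cyclotomic polynomial divides the mask polynomial of `A` in `ℤ[X]`. -/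
def cycDvd (M s : ℕ) (A : Finset (ZMod M)) : Prop :=
  cyclotomic s ℤ ∣ maskPoly M A

/-- `A ⊕ B = ℤ_M` : every element of `ℤ_M` has a unique representation `a + b`
with `a ∈ A` and `b ∈ B`. -/
def IsTiling (M : ℕ) (A B : Set (ZMod M)) : Prop :=
  ∀ z : ZMod M, ∃! ab : ZMod M × ZMod M, ab.1 ∈ A ∧ ab.2 ∈ B ∧ ab.1 + ab.2 = z

/-- The Coven–Meyerowitz property (T2): whenever `s_1, …, s_m` are prime powers dividing `M`,
powers of pairwise distinct primes, with `Φ_{s_t} | A` for each `t`, then `Φ_{s_1 ⋯ s_m} | A`. -/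
def SatisfiesT2 (M : ℕ) (A : Finset (ZMod M)) : Prop :=
  ∀ (P : Finset ℕ) (e : ℕ → ℕ), P.Nonempty →
    (∀ p ∈ P, p.Prime ∧ 1 ≤ e p ∧ p ^ e p ∣ M ∧ cycDvd M (p ^ e p) A) →
    cycDvd M (∏ p ∈ P, p ^ e p) A

/-- The `D`-grid through `x` in `ZMod M` : `Λ(x, D) = {y : D ∣ y - x}`. -/
def gridSet (M : ℕ) (x : ZMod M) (D : ℕ) : Set (ZMod M) :=
  {y : ZMod M | (D : ZMod M) ∣ (y - x)}

/-- `S` is fibered in the `p` direction on scale `M`: every element of `S` has its whole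
fiber `Λ(s, M/p)` contained in `S`. -/
def Fibered (M p : ℕ) (S : Set (ZMod M)) : Prop :=
  ∀ s ∈ S, gridSet M s (M / p) ⊆ S

/-- `Div_N(S)` : the set of values `(s - s', N) = gcd(s - s', N)` for `s, s' ∈ S`. -/
def DivSet (M N : ℕ) (S : Set (ZMod M)) : Set ℕ :=
  {m : ℕ | ∃ s ∈ S, ∃ s' ∈ S, Nat.gcd (s - s').val N = m}


/-- Abstract direct-sum decomposition `f(A) ⊕ g(B) = G`. -/
def Til {G : Type} [AddCommGroup G] [Fintype G] (A B : Finset ℤ) (f g : ℤ → G) : Prop :=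
  A.card * B.card = Fintype.card G ∧
  ∀ a ∈ A, ∀ a' ∈ A, ∀ b ∈ B, ∀ b' ∈ B, f a + g b = f a' + g b' → a = a' ∧ b = b'

theorem Til.surj {G : Type} [AddCommGroup G] [Fintype G] {A B : Finset ℤ} {f g : ℤ → G}
    (h : Til A B f g) (z : G) : ∃ a ∈ A, ∃ b ∈ B, f a + g b = z := by
  classical
  have hinj : Set.InjOn (fun x : ℤ × ℤ => f x.1 + g x.2) (A ×ˢ B : Finset (ℤ × ℤ)) := by
    intro x hx y hy hxy
    simp only [Finset.coe_product, Set.mem_prod, Finset.mem_coe] at hx hy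
    obtain ⟨h1, h2⟩ := h.2 x.1 hx.1 y.1 hy.1 x.2 hx.2 y.2 hy.2 hxy
    exact Prod.ext h1 h2
  have hc : ((A ×ˢ B).image (fun x : ℤ × ℤ => f x.1 + g x.2)).card = Fintype.card G := by
    rw [Finset.card_image_of_injOn hinj, Finset.card_product, h.1]
  have hu := (Finset.card_eq_iff_eq_univ _).1 hc
  have hz : z ∈ (A ×ˢ B).image (fun x : ℤ × ℤ => f x.1 + g x.2) := by rw [hu]; simp
  simp only [Finset.mem_image, Finset.mem_product, Prod.exists] at hz
  obtain ⟨a, b, ⟨ha, hb⟩, hab⟩ := hz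
  exact ⟨a, ha, b, hb, hab⟩

theorem Til.of_surj {G : Type} [AddCommGroup G] [Fintype G] {A B : Finset ℤ} {f g : ℤ → G}
    (hcard : A.card * B.card = Fintype.card G)
    (h : ∀ z : G, ∃ a ∈ A, ∃ b ∈ B, f a + g b = z) : Til A B f g := by
  classical
  refine ⟨hcard, ?_⟩
  have hu : (A ×ˢ B).image (fun x : ℤ × ℤ => f x.1 + g x.2) = Finset.univ := by
    ext z
    obtain ⟨a, ha, b, hb, hab⟩ := h z
    simp only [Finset.mem_image, Finset.mem_product, Prod.exists, Finset.mem_univ, iff_true]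
    exact ⟨a, b, ⟨ha, hb⟩, hab⟩
  have hinj : Set.InjOn (fun x : ℤ × ℤ => f x.1 + g x.2) (A ×ˢ B : Finset (ℤ × ℤ)) := by
    apply Finset.card_image_iff.1
    rw [hu, Finset.card_univ, Finset.card_product, hcard]
  intro a ha a' ha' b hb b' hb' hab
  have := hinj (x₁ := (a, b)) (x₂ := (a', b')) (by simp [ha, hb]) (by simp [ha', hb']) hab
  simpa using this

/-- Theorem of Tijdeman. -/
theorem Til.tij {G : Type} [AddCommGroup G] [Fintype G] {A B : Finset ℤ} {f g : ℤ → G}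
    (h : Til A B f g) (l : ℕ) (hl : l.Prime) (hA : ¬ l ∣ A.card) :
    Til A B (fun a => l • f a) g := by
  classical
  have : Fact l.Prime := ⟨hl⟩
  apply Til.of_surj h.1
  have hchar : CharP (AddMonoidAlgebra (ZMod l) G) l :=
    charP_of_injective_algebraMap (R := ZMod l) (algebraMap (ZMod l) _).injective l
  obtain ⟨fA, hfA⟩ : ∃ x : AddMonoidAlgebra (ZMod l) G,
    x = ∑ a ∈ A, AddMonoidAlgebra.single (f a) 1 := ⟨_, rfl⟩
  obtain ⟨fB, hfB⟩ : ∃ x : AddMonoidAlgebra (ZMod l) G,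
    x = ∑ b ∈ B, AddMonoidAlgebra.single (g b) 1 := ⟨_, rfl⟩
  obtain ⟨J, hJd⟩ : ∃ x : AddMonoidAlgebra (ZMod l) G,
    x = ∑ z : G, AddMonoidAlgebra.single z 1 := ⟨_, rfl⟩
  have hJ : fA * fB = J := by
    rw [hfA, hfB, hJd, Finset.sum_mul_sum]
    simp only [AddMonoidAlgebra.single_mul_single, one_mul]
    rw [← Finset.sum_product']
    refine Finset.sum_bij (fun x _ => f x.1 + g x.2) (by simp) ?_ ?_ (by simp)
    · rintro ⟨a, b⟩ hx ⟨a', b'⟩ hy hxy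
      simp only [Finset.mem_product] at hx hy
      obtain ⟨h1, h2⟩ := h.2 a hx.1 a' hy.1 b hx.2 b' hy.2 hxy
      rw [h1, h2]
    · intro z _
      obtain ⟨a, ha, b, hb, hab⟩ := h.surj z
      exact ⟨(a, b), by simp [ha, hb], hab⟩
  have hfJ : fA * J = A.card • J := by
    rw [hfA, Finset.sum_mul, Finset.card_eq_sum_ones, Finset.sum_smul]
    refine Finset.sum_congr rfl fun a _ => ?_
    simp only [hJd, Finset.mul_sum, AddMonoidAlgebra.single_mul_single, one_mul, one_smul]
    exact Fintype.sum_equiv (Equiv.addLeft (f a)) _ _ (fun z => rfl)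
  have hpowJ : ∀ n : ℕ, fA ^ n * J = (A.card ^ n) • J := by
    intro n
    induction n with
    | zero => simp
    | succ n ih => rw [pow_succ, mul_assoc, hfJ, mul_smul_comm, ih, smul_smul, pow_succ']
  have hfr : fA ^ l = ∑ a ∈ A, AddMonoidAlgebra.single (l • f a) (1 : ZMod l) := by
    rw [hfA, sum_pow_char]
    refine Finset.sum_congr rfl fun a _ => ?_
    rw [AddMonoidAlgebra.single_pow, one_pow]
  have hmain : (∑ a ∈ A, AddMonoidAlgebra.single (l • f a) (1 : ZMod l)) * fB
      = (A.card ^ (l - 1)) • J := by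
    rw [← hfr, ← hpowJ, ← hJ, ← mul_assoc, ← pow_succ, Nat.sub_add_cancel hl.one_le]
  intro z
  by_contra hz
  push Not at hz
  have e1 := congrArg (fun x => x.coeff z) hmain
  rw [hfB, hJd, Finset.sum_mul_sum] at e1
  simp only [AddMonoidAlgebra.single_mul_single, one_mul, AddMonoidAlgebra.coeff_sum,
    AddMonoidAlgebra.coeff_smul, AddMonoidAlgebra.coeff_single, Finsupp.finsetSum_apply,
    Finsupp.smul_apply, Finsupp.single_apply] at e1
  rw [Finset.sum_eq_zero] at e1
  · simp only [Finset.sum_ite_eq', Finset.mem_univ, if_true] at e1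
    have e2 : ((A.card ^ (l - 1) : ℕ) : ZMod l) = 0 := by simpa using e1.symm
    rw [ZMod.natCast_eq_zero_iff] at e2
    exact hA (hl.dvd_of_dvd_pow e2)
  · intro a ha
    refine Finset.sum_eq_zero fun b hb => ?_
    rw [if_neg (hz a ha b hb)]

theorem Til.symm {G : Type} [AddCommGroup G] [Fintype G] {A B : Finset ℤ} {f g : ℤ → G}
    (h : Til A B f g) : Til B A g f :=
  ⟨by rw [mul_comm]; exact h.1, fun b hb b' hb' a ha a' ha' e =>
    (h.2 a ha a' ha' b hb b' hb' (by rw [add_comm, e, add_comm])).symm⟩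

theorem Til.mulc {G : Type} [AddCommGroup G] [Fintype G] {A B : Finset ℤ} {f g : ℤ → G}
    (h : Til A B f g) (u : ℕ) (hu : Nat.Coprime u A.card) (h0 : u ≠ 0) :
    Til A B (fun a => u • f a) g := by
  induction u using induction_on_primes with
  | zero => exact absurd rfl h0
  | one => simpa using h
  | prime_mul p a hp ih =>
    have h1 := ih (Nat.Coprime.coprime_mul_left hu) (by rintro rfl; simp at h0)
    have h2 := h1.tij p hp
      ((Nat.Prime.coprime_iff_not_dvd hp).1 (Nat.Coprime.coprime_mul_right hu))
    simpa [mul_smul] using h2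

/-- `A ⊕ B` tiles the integers modulo `M`. -/
def TT (M : ℕ) (A B : Finset ℤ) : Prop :=
  A.card * B.card = M ∧
  ∀ a ∈ A, ∀ a' ∈ A, ∀ b ∈ B, ∀ b' ∈ B, (M : ℤ) ∣ (a + b) - (a' + b') → a = a' ∧ b = b'

theorem TT.symm {M : ℕ} {A B : Finset ℤ} (h : TT M A B) : TT M B A :=
  ⟨by rw [mul_comm]; exact h.1, fun b hb b' hb' a ha a' ha' e =>
    (h.2 a ha a' ha' b hb b' hb' (by convert e using 1; ring)).symm⟩

theorem TT.til {M : ℕ} [NeZero M] {A B : Finset ℤ} (h : TT M A B) :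
    Til A B (fun a => (a : ZMod M)) (fun b => (b : ZMod M)) := by
  refine ⟨by rw [ZMod.card]; exact h.1, fun a ha a' ha' b hb b' hb' e =>
    h.2 a ha a' ha' b hb b' hb' ?_⟩
  rw [← ZMod.intCast_zmod_eq_zero_iff_dvd]
  push_cast
  rw [e, sub_self]

theorem TT.surj {M : ℕ} [NeZero M] {A B : Finset ℤ} (h : TT M A B) (z : ℤ) :
    ∃ a ∈ A, ∃ b ∈ B, (M : ℤ) ∣ (a + b) - z := by
  obtain ⟨a, ha, b, hb, e⟩ := h.til.surj (z : ZMod M)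
  refine ⟨a, ha, b, hb, ?_⟩
  rw [← ZMod.intCast_zmod_eq_zero_iff_dvd]
  push_cast
  rw [e, sub_self]

/-- two elements of `ZMod M` with the same gcd with `M` differ by a unit -/
theorem unit_of_gcd {M : ℕ} [NeZero M] (x y : ℤ) (h : Int.gcd x M = Int.gcd y M) :
    ∃ u : ℕ, u ≠ 0 ∧ Nat.Coprime u M ∧ (u : ZMod M) * (x : ZMod M) = (y : ZMod M) := by
  obtain ⟨d, hd, u, hu, hx⟩ := ZMod.eq_unit_mul_divisor (x : ZMod M)
  obtain ⟨e, he, v, hv, hy⟩ := ZMod.eq_unit_mul_divisor (y : ZMod M)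
  have key : ∀ (x : ℤ) (d : ℕ) (u : ZMod M), d ∣ M → IsUnit u → (x : ZMod M) = u * d →
      Int.gcd x M = d := by
    intro x d u hd hu hx
    apply Nat.dvd_antisymm
    · have h1 : ((x : ZMod M)) * (hu.unit⁻¹ : (ZMod M)ˣ) = d := by
        rw [hx, mul_comm u, mul_assoc, IsUnit.mul_val_inv, mul_one]
      obtain ⟨w, hw⟩ := ZMod.intCast_surjective ((hu.unit⁻¹ : (ZMod M)ˣ) : ZMod M)
      rw [← hw] at h1
      have h2 : (M : ℤ) ∣ x * w - d := by
        rw [← ZMod.intCast_zmod_eq_zero_iff_dvd]; push_cast; rw [h1, sub_self]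
      have h3 : ((Int.gcd x M : ℕ) : ℤ) ∣ (d : ℤ) := by
        have h4 := (Int.gcd_dvd_left x M).mul_right w
        have h5 := (Int.gcd_dvd_right x M).trans h2
        have := dvd_sub h4 h5
        simpa using this
      exact_mod_cast h3
    · obtain ⟨w, hw⟩ := ZMod.intCast_surjective u
      have h2 : (M : ℤ) ∣ x - w * d := by
        rw [← ZMod.intCast_zmod_eq_zero_iff_dvd]; push_cast; rw [hx, hw, sub_self]
      have hd' : (d : ℤ) ∣ (M : ℤ) := by exact_mod_cast hd
      have h3 : (d : ℤ) ∣ x := by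
        have := dvd_add (hd'.trans h2) (Dvd.intro_left w rfl : (d : ℤ) ∣ w * d)
        simpa using this
      exact_mod_cast Int.dvd_coe_gcd h3 hd'
  have hde : d = e := by rw [← key x d u hd hu hx, ← key y e v he hv hy, h]
  subst hde
  have hw : IsUnit (v * (hu.unit⁻¹ : (ZMod M)ˣ)) := hv.mul (Units.isUnit _)
  refine ⟨(v * (hu.unit⁻¹ : (ZMod M)ˣ)).val + M, by have := NeZero.ne M; omega, ?_, ?_⟩
  · rw [Nat.coprime_add_self_left, ← ZMod.isUnit_iff_coprime, ZMod.natCast_zmod_val]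
    exact hw
  · push_cast
    rw [ZMod.natCast_zmod_val, hx, hy]
    have : ((hu.unit⁻¹ : (ZMod M)ˣ) : ZMod M) * u = 1 := IsUnit.val_inv_mul hu
    simp only [CharP.cast_eq_zero, add_zero]
    linear_combination (v * d) * this

/-- Theorem of Sands. -/
theorem TT.sands {M : ℕ} [NeZero M] {A B : Finset ℤ} (h : TT M A B) {a a' b b' : ℤ}
    (ha : a ∈ A) (ha' : a' ∈ A) (hb : b ∈ B) (hb' : b' ∈ B)
    (hg : Int.gcd (a - a') M = Int.gcd (b - b') M) : a = a' ∧ b = b' := by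
  obtain ⟨u, hu0, hu, e⟩ := unit_of_gcd (a - a') (b' - b)
    (by rw [hg, ← neg_sub b b', Int.neg_gcd])
  have hu' : Nat.Coprime u A.card := Nat.Coprime.coprime_dvd_right ⟨_, h.1.symm⟩ hu
  have h2 := (h.til.mulc u hu' hu0).2 a ha a' ha' b hb b' hb'
  apply h2
  simp only [nsmul_eq_mul]
  push_cast at e
  linear_combination e

theorem gcd_sq_eq (p : ℕ) (hp : p.Prime) (x y : ℤ) (h1 : (p : ℤ) ∣ x ↔ (p : ℤ) ∣ y)
    (h2 : (p : ℤ) ^ 2 ∣ x ↔ (p : ℤ) ^ 2 ∣ y) :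
    Int.gcd x ((p ^ 2 : ℕ) : ℤ) = Int.gcd y ((p ^ 2 : ℕ) : ℤ) := by
  have key : ∀ x y : ℤ, ((p : ℤ) ∣ x → (p : ℤ) ∣ y) → ((p : ℤ) ^ 2 ∣ x → (p : ℤ) ^ 2 ∣ y) →
      Int.gcd x ((p ^ 2 : ℕ) : ℤ) ∣ Int.gcd y ((p ^ 2 : ℕ) : ℤ) := by
    intro x y h1 h2
    have hd : Int.gcd x ((p ^ 2 : ℕ) : ℤ) ∣ p ^ 2 := by
      have := Int.gcd_dvd_right x ((p ^ 2 : ℕ) : ℤ)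
      exact_mod_cast this
    have hx := Int.gcd_dvd_left x ((p ^ 2 : ℕ) : ℤ)
    apply Int.dvd_gcd _ (Int.gcd_dvd_right x _)
    obtain ⟨k, hk, hk2⟩ := (Nat.dvd_prime_pow hp).1 hd
    rw [hk2] at hx ⊢
    interval_cases k
    · simp
    · simpa using h1 (by simpa using hx)
    · exact_mod_cast h2 (by exact_mod_cast hx)
  exact Nat.dvd_antisymm (key x y h1.1 h2.1) (key y x h1.2 h2.2)

theorem gcd_mul_eq (m n : ℕ) (hmn : Nat.Coprime m n) (x y : ℤ)
    (h1 : Int.gcd x (m : ℤ) = Int.gcd y (m : ℤ)) (h2 : Int.gcd x (n : ℤ) = Int.gcd y (n : ℤ)) :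
    Int.gcd x ((m * n : ℕ) : ℤ) = Int.gcd y ((m * n : ℕ) : ℤ) := by
  simp only [Int.gcd, Int.natAbs_natCast] at *
  rw [Nat.Coprime.gcd_mul _ hmn, Nat.Coprime.gcd_mul _ hmn, h1, h2]

theorem gcd_eq_of_dvd_add (n : ℕ) (x y : ℤ) (h : (n : ℤ) ∣ x + y) :
    Int.gcd x (n : ℤ) = Int.gcd y (n : ℤ) := by
  obtain ⟨k, hk⟩ := h
  have : x = -y + n * k := by linarith
  rw [this, mul_comm, Int.gcd_add_mul_right_left, Int.neg_gcd]

/-- the splitting lemma -/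
theorem TT.split {M p N : ℕ} [NeZero M] (hp : p.Prime) (hM : M = p ^ 2 * N)
    (hc : Nat.Coprime p N) {A B : Finset ℤ} (h : TT M A B) {a a' b b' : ℤ}
    (ha : a ∈ A) (ha' : a' ∈ A) (hb : b ∈ B) (hb' : b' ∈ B)
    (hN : (N : ℤ) ∣ (a + b) - (a' + b'))
    (h1 : (p : ℤ) ∣ a - a' ↔ (p : ℤ) ∣ b - b')
    (h2 : (p : ℤ) ^ 2 ∣ a - a' ↔ (p : ℤ) ^ 2 ∣ b - b') : a = a' ∧ b = b' := by
  apply h.sands ha ha' hb hb'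
  rw [hM]
  apply gcd_mul_eq _ _ (Nat.Coprime.pow_left 2 hc)
  · exact gcd_sq_eq p hp _ _ h1 h2
  · apply gcd_eq_of_dvd_add
    convert hN using 1; ring

/-- parts of the splitting: congruence mod `p` -/
theorem TT.split1 {M p N : ℕ} [NeZero M] (hp : p.Prime) (hM : M = p ^ 2 * N)
    (hc : Nat.Coprime p N) {A B : Finset ℤ} (h : TT M A B) {a a' b b' : ℤ}
    (ha : a ∈ A) (ha' : a' ∈ A) (hb : b ∈ B) (hb' : b' ∈ B)
    (hN : (N : ℤ) ∣ (a + b) - (a' + b')) : (p : ℤ) ∣ a - a' ∨ (p : ℤ) ∣ b - b' := by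
  by_contra hcon
  push Not at hcon
  have hpp : (p : ℤ) ∣ (p : ℤ) ^ 2 := Dvd.intro_left (p : ℤ) (by ring)
  have := h.split hp hM hc ha ha' hb hb' hN (by simp [hcon])
    ⟨fun hh => absurd (hpp.trans hh) hcon.1, fun hh => absurd (hpp.trans hh) hcon.2⟩
  exact hcon.1 (by simp [this.1])


theorem dvc {a b c : ℤ} (h : a ∣ b) (e : c = b) : a ∣ c := e ▸ h

/-- slab of `A` -/
def slab (p : ℕ) (s : ℤ → ℤ) (A : Finset ℤ) : Finset ℤ :=
  A.filter (fun a => (p : ℤ) ^ 2 ∣ a - s a)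

/-- residue class of `B` -/
def resc (p : ℕ) (x : ℤ) (B : Finset ℤ) : Finset ℤ :=
  B.filter (fun b => (p : ℤ) ∣ b - x)

/-- `s` chooses for every class mod `p` a lift mod `p ^ 2` -/
def Sel (p : ℕ) (s : ℤ → ℤ) : Prop :=
  (∀ t, (p : ℤ) ∣ t - s t) ∧ ∀ t t', (p : ℤ) ∣ t - t' → s t = s t'

theorem Sel.shift {p : ℕ} {s : ℤ → ℤ} (h : Sel p s) (j : ℤ) : Sel p (fun t => s t + p * j) := by
  refine ⟨fun t => ?_, fun t t' e => by simp [h.2 t t' e]⟩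
  have := dvd_sub (h.1 t) (Dvd.intro j rfl : (p : ℤ) ∣ p * j)
  exact dvc this (by ring)

theorem uniq_res (p : ℕ) (hp : 0 < p) (c : ℤ) :
    ∃ j0 ∈ Finset.range p, ∀ j ∈ Finset.range p, ((p : ℤ) ∣ c - (j : ℤ) ↔ j = j0) := by
  have h0 : (0 : ℤ) < p := by exact_mod_cast hp
  have h1 := Int.emod_nonneg c h0.ne'
  have h2 := Int.emod_lt_of_pos c h0
  refine ⟨(c % p).toNat, by simp; omega, fun j hj => ?_⟩
  simp only [Finset.mem_range] at hj
  constructor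
  · intro h
    have h3 : c % p = (j : ℤ) % p := Int.emod_eq_emod_iff_emod_sub_eq_zero.2 (Int.emod_eq_zero_of_dvd h)
    rw [Int.emod_eq_of_lt (a := (j : ℤ)) (by omega) (by omega)] at h3
    omega
  · rintro rfl
    rw [Int.toNat_of_nonneg h1]
    exact Int.dvd_self_sub_emod

theorem sum_slab {E : Type} [AddCommMonoid E] (p : ℕ) (hp : 0 < p) (s : ℤ → ℤ) (hs : Sel p s)
    (A : Finset ℤ) (F : ℤ → E) :
    ∑ j ∈ Finset.range p, ∑ a ∈ slab p (fun t => s t + p * (j : ℤ)) A, F a = ∑ a ∈ A, F a := by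
  simp only [slab, Finset.sum_filter]
  rw [Finset.sum_comm]
  refine Finset.sum_congr rfl fun a _ => ?_
  obtain ⟨c, hc⟩ := hs.1 a
  obtain ⟨j0, hj0, h⟩ := uniq_res p hp c
  have h0 : (p : ℤ) ≠ 0 := by exact_mod_cast hp.ne'
  rw [Finset.sum_eq_single j0]
  · rw [if_pos]
    have : a - (s a + p * (j0 : ℤ)) = p * (c - j0) := by linear_combination hc
    rw [this, pow_two]
    exact mul_dvd_mul_left _ ((h j0 hj0).2 rfl)
  · intro j hj hne
    rw [if_neg]
    have : a - (s a + p * (j : ℤ)) = p * (c - j) := by linear_combination hc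
    rw [this, pow_two]
    intro hd
    exact hne ((h j hj).1 ((mul_dvd_mul_iff_left h0).1 hd))
  · intro hh; exact absurd hj0 hh

theorem sum_resc {E : Type} [AddCommMonoid E] (p : ℕ) (hp : 0 < p)
    (A : Finset ℤ) (F : ℤ → E) :
    ∑ j ∈ Finset.range p, ∑ a ∈ resc p (j : ℤ) A, F a = ∑ a ∈ A, F a := by
  simp only [resc, Finset.sum_filter]
  rw [Finset.sum_comm]
  refine Finset.sum_congr rfl fun a _ => ?_
  obtain ⟨j0, hj0, h⟩ := uniq_res p hp a
  rw [Finset.sum_eq_single j0]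
  · rw [if_pos ((h j0 hj0).2 rfl)]
  · intro j hj hne
    rw [if_neg]
    intro hd
    exact hne ((h j hj).1 hd)
  · intro hh; exact absurd hj0 hh

theorem card_slab (p : ℕ) (hp : 0 < p) (s : ℤ → ℤ) (hs : Sel p s) (A : Finset ℤ) :
    ∑ j ∈ Finset.range p, (slab p (fun t => s t + p * (j : ℤ)) A).card = A.card := by
  simp only [Finset.card_eq_sum_ones]
  exact sum_slab p hp s hs A (fun _ => (1 : ℕ))

theorem card_resc (p : ℕ) (hp : 0 < p) (A : Finset ℤ) :
    ∑ j ∈ Finset.range p, (resc p (j : ℤ) A).card = A.card := by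
  simp only [Finset.card_eq_sum_ones]
  exact sum_resc p hp A (fun _ => (1 : ℕ))

theorem resc_congr (p : ℕ) (x y : ℤ) (h : (p : ℤ) ∣ x - y) (B : Finset ℤ) :
    resc p x B = resc p y B := by
  simp only [resc]
  refine Finset.filter_congr fun b _ => ?_
  constructor
  · intro hb; exact dvc (dvd_add hb h) (by ring)
  · intro hb; exact dvc (dvd_sub hb h) (by ring)

theorem eq_of_sum_bound (p K L S : ℕ) (X : ℕ → ℕ) (hX : ∑ j ∈ Finset.range p, X j = S)
    (hS : S * K = p * L) (hb : ∀ j ∈ Finset.range p, X j * K ≤ L) :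
    ∀ j ∈ Finset.range p, X j * K = L := by
  have h1 : ∑ j ∈ Finset.range p, X j * K = ∑ j ∈ Finset.range p, L := by
    rw [← Finset.sum_mul, hX, hS]; simp
  exact (Finset.sum_eq_sum_iff_of_le hb).1 h1

theorem inj_bound {G : Type} [AddCommGroup G] [Fintype G] {A B : Finset ℤ} {f g : ℤ → G}
    (h : ∀ a ∈ A, ∀ a' ∈ A, ∀ b ∈ B, ∀ b' ∈ B, f a + g b = f a' + g b' → a = a' ∧ b = b') :
    A.card * B.card ≤ Fintype.card G := by
  classical
  have hinj : Set.InjOn (fun x : ℤ × ℤ => f x.1 + g x.2) (A ×ˢ B : Finset (ℤ × ℤ)) := by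
    intro x hx y hy hxy
    simp only [Finset.coe_product, Set.mem_prod, Finset.mem_coe] at hx hy
    obtain ⟨h1, h2⟩ := h x.1 hx.1 y.1 hy.1 x.2 hx.2 y.2 hy.2 hxy
    exact Prod.ext h1 h2
  rw [← Finset.card_product, ← Finset.card_image_of_injOn hinj]
  exact Finset.card_le_univ _

theorem TT_of_til {N : ℕ} [NeZero N] {A B : Finset ℤ}
    (h : Til A B (fun a => (a : ZMod N)) (fun b => (b : ZMod N))) : TT N A B := by
  refine ⟨by rw [h.1, ZMod.card], fun a ha a' ha' b hb b' hb' e =>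
    h.2 a ha a' ha' b hb b' hb' ?_⟩
  rw [← ZMod.intCast_zmod_eq_zero_iff_dvd] at e
  push_cast at e
  exact sub_eq_zero.1 e

theorem TT_of_pmul {N p : ℕ} [NeZero N] (hc : Nat.Coprime p N) {A B : Finset ℤ}
    (h : Til A B (fun a => (a : ZMod N)) (fun b => p • (b : ZMod N))) : TT N A B := by
  obtain ⟨u, hu0, hu, e⟩ := unit_of_gcd (M := N) (p : ℤ) 1
    (by simpa [Int.gcd, Nat.Coprime] using hc)
  have hB : Nat.Coprime u B.card := by
    refine Nat.Coprime.coprime_dvd_right ?_ hu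
    have := h.1
    rw [ZMod.card] at this
    exact ⟨_, by rw [← this, mul_comm]⟩
  have h2 := (h.symm.mulc u hB hu0).symm
  apply TT_of_til
  convert h2 using 2 with b
  simp only [nsmul_eq_mul]
  push_cast at e
  rw [← mul_assoc, e, one_mul]


theorem dvd_sq_mul {p N M : ℕ} (hM : M = p ^ 2 * N) (hc : Nat.Coprime p N) {d : ℤ}
    (h1 : (p : ℤ) ^ 2 ∣ d) (h2 : (N : ℤ) ∣ d) : (M : ℤ) ∣ d := by
  rw [hM]; push_cast
  refine IsCoprime.mul_dvd ?_ h1 h2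
  exact IsCoprime.pow_left (Nat.isCoprime_iff_coprime.2 hc)

theorem zeq {n : ℕ} {a b : ℤ} : (a : ZMod n) = (b : ZMod n) ↔ (n : ℤ) ∣ a - b := by
  rw [← ZMod.intCast_zmod_eq_zero_iff_dvd, Int.cast_sub, sub_eq_zero]

theorem resc_all (p : ℕ) (hp : 0 < p) (B : Finset ℤ) (P : Finset ℤ → Prop)
    (h : ∀ j ∈ Finset.range p, P (resc p (j : ℤ) B)) (x : ℤ) : P (resc p x B) := by
  obtain ⟨j, hj, hh⟩ := uniq_res p hp x
  rw [resc_congr p x j ((hh j hj).2 rfl)]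
  exact h j hj

def Hs (p N : ℕ) (A B : Finset ℤ) : Prop :=
  ∀ a ∈ A, ∀ a' ∈ A, ∀ b ∈ B, ∀ b' ∈ B, (N : ℤ) ∣ (a + b) - (a' + b') → (p : ℤ) ∣ a - a'

def Ht (p N : ℕ) (A B : Finset ℤ) : Prop :=
  ∀ a ∈ A, ∀ a' ∈ A, ∀ b ∈ B, ∀ b' ∈ B, (N : ℤ) ∣ (a + b) - (a' + b') →
    (p : ℤ) ∣ (a + b) - (a' + b') → (p : ℤ) ^ 2 ∣ b - b'

def Red (p N : ℕ) (A B : Finset ℤ) : Prop :=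
  ∀ s, Sel p s → ∀ x, TT N (slab p s A) (resc p x B)

theorem not_dvd_aux {p N X Y : ℕ} (hp : p.Prime) (hc : Nat.Coprime p N) (hX : p ∣ X)
    (h : X * Y = N * p) : ¬ p ∣ Y := by
  intro hY
  have h1 : p * p ∣ N * p := h ▸ mul_dvd_mul hX hY
  have h2 : p ∣ N := (Nat.mul_dvd_mul_iff_right hp.pos).1 h1
  exact (Nat.Prime.coprime_iff_not_dvd hp).1 hc h2

theorem red_of_Hs {M p N : ℕ} [NeZero M] [NeZero N] (hp : p.Prime) (hM : M = p ^ 2 * N)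
    (hc : Nat.Coprime p N) {A B : Finset ℤ} (h : TT M A B) (hA : p ∣ A.card)
    (H : Hs p N A B) : Red p N A B := by
  intro s hs x
  have : NeZero p := ⟨hp.ne_zero⟩
  have hp0 : (p : ℤ) ≠ 0 := by exact_mod_cast hp.ne_zero
  let f : ℤ → ZMod N × ZMod p := fun a => ((a : ZMod N), (((a - s a) / p : ℤ) : ZMod p))
  let g : ℤ → ℤ → ZMod N × ZMod p := fun x b => ((b : ZMod N), (((b - x) / p : ℤ) : ZMod p))
  have inj1 : ∀ x, ∀ a ∈ A, ∀ a' ∈ A, ∀ b ∈ resc p x B, ∀ b' ∈ resc p x B,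
      f a + g x b = f a' + g x b' → a = a' ∧ b = b' := by
    intro x a ha a' ha' b hb b' hb' e
    simp only [resc, Finset.mem_filter] at hb hb'
    simp only [f, g, Prod.mk_add_mk, Prod.mk.injEq, ← Int.cast_add, zeq] at e
    obtain ⟨e1, e2⟩ := e
    have h1 := H a ha a' ha' b hb.1 b' hb'.1 e1
    have h2 := hs.2 a a' h1
    apply h.2 a ha a' ha' b hb.1 b' hb'.1
    refine dvd_sq_mul hM hc ?_ e1
    obtain ⟨c, hc⟩ := hs.1 a
    obtain ⟨c', hc'⟩ := hs.1 a'
    obtain ⟨d, hd⟩ := hb.2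
    obtain ⟨d', hd'⟩ := hb'.2
    rw [hc, hc', hd, hd', Int.mul_ediv_cancel_left _ hp0, Int.mul_ediv_cancel_left _ hp0,
      Int.mul_ediv_cancel_left _ hp0, Int.mul_ediv_cancel_left _ hp0] at e2
    obtain ⟨k, hk⟩ := e2
    exact ⟨k, by linear_combination hc - hc' + hd - hd' + h2 + p * hk⟩
  have cards : ∀ x, A.card * (resc p x B).card = N * p := by
    apply resc_all p hp.pos B (fun Y => A.card * Y.card = N * p)
    intro j hj
    rw [mul_comm]
    refine eq_of_sum_bound p A.card (N * p) B.card (fun j => (resc p (j : ℤ) B).card)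
      (card_resc p hp.pos B) ?_ ?_ j hj
    · rw [mul_comm, h.1, hM]; ring
    · intro j hj
      have := inj_bound (inj1 j)
      simp only [Fintype.card_prod, ZMod.card] at this
      rw [mul_comm]; exact this
  have T1 : Til A (resc p x B) f (g x) :=
    ⟨by simp only [Fintype.card_prod, ZMod.card]; exact cards x, inj1 x⟩
  have T2 := (T1.symm.tij p hp (not_dvd_aux hp hc hA (cards x))).symm
  have inj2 : ∀ s', (∃ j : ℤ, s' = fun t => s t + p * j) → ∀ a ∈ slab p s' A, ∀ a' ∈ slab p s' A,
      ∀ b ∈ resc p x B, ∀ b' ∈ resc p x B,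
      (a : ZMod N) + p • (b : ZMod N) = (a' : ZMod N) + p • (b' : ZMod N) → a = a' ∧ b = b' := by
    rintro s' ⟨j, rfl⟩ a ha a' ha' b hb b' hb' e
    simp only [slab, Finset.mem_filter] at ha ha'
    apply T2.2 a ha.1 a' ha'.1 b hb b' hb'
    simp only [f, g, Prod.smul_mk, Prod.mk_add_mk, Prod.mk.injEq]
    refine ⟨e, ?_⟩
    have key : ∀ a : ℤ, (p : ℤ) ^ 2 ∣ a - (s a + p * j) →
        (((a - s a) / p : ℤ) : ZMod p) = (j : ZMod p) := by
      rintro a ⟨c, hc⟩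
      have : a - s a = p * (p * c + j) := by linear_combination hc
      rw [this, Int.mul_ediv_cancel_left _ hp0]
      simp
    rw [key a ha.2, key a' ha'.2]
    simp
  have cards2 : (slab p s A).card * (resc p x B).card = N := by
    have := eq_of_sum_bound p (resc p x B).card N A.card
      (fun j => (slab p (fun t => s t + p * (j : ℤ)) A).card)
      (card_slab p hp.pos s hs A) (by rw [cards x, mul_comm]) (by
        intro j hj
        have := inj_bound (inj2 _ ⟨j, rfl⟩)
        rwa [ZMod.card] at this) 0 (by simp [hp.pos])
    simpa using this
  refine TT_of_pmul hc ⟨by rw [ZMod.card]; exact cards2, inj2 s ⟨0, by simp⟩⟩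

theorem red_of_Ht {M p N : ℕ} [NeZero M] [NeZero N] (hp : p.Prime) (hM : M = p ^ 2 * N)
    (hc : Nat.Coprime p N) {A B : Finset ℤ} (h : TT M A B) (hB : p ∣ B.card)
    (H : Ht p N A B) : Red p N A B := by
  intro s hs x
  have : NeZero p := ⟨hp.ne_zero⟩
  have hp0 : (p : ℤ) ≠ 0 := by exact_mod_cast hp.ne_zero
  have hpp : (p : ℤ) ∣ (p : ℤ) ^ 2 := Dvd.intro_left (p : ℤ) (by ring)
  let f : ℤ → ZMod N × ZMod p := fun a => ((a : ZMod N), (a : ZMod p))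
  have inj1 : ∀ s, Sel p s → ∀ a ∈ slab p s A, ∀ a' ∈ slab p s A, ∀ b ∈ B, ∀ b' ∈ B,
      f a + f b = f a' + f b' → a = a' ∧ b = b' := by
    intro s hs a ha a' ha' b hb b' hb' e
    simp only [slab, Finset.mem_filter] at ha ha'
    simp only [f, Prod.mk_add_mk, Prod.mk.injEq, ← Int.cast_add, zeq] at e
    obtain ⟨e1, e2⟩ := e
    have h1 := H a ha.1 a' ha'.1 b hb b' hb' e1 e2
    have h3 : (p : ℤ) ∣ a - a' := dvc (dvd_sub e2 (hpp.trans h1)) (by ring)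
    have h2 := hs.2 a a' h3
    apply h.2 a ha.1 a' ha'.1 b hb b' hb'
    refine dvd_sq_mul hM hc ?_ e1
    exact dvc (dvd_add (dvd_sub ha.2 ha'.2) h1) (by rw [h2]; ring)
  have cards : B.card * (slab p s A).card = N * p := by
    have := eq_of_sum_bound p B.card (N * p) A.card
      (fun j => (slab p (fun t => s t + p * (j : ℤ)) A).card)
      (card_slab p hp.pos s hs A) (by rw [h.1, hM]; ring) (by
        intro j hj
        have := inj_bound (inj1 _ (hs.shift j))
        simpa only [Fintype.card_prod, ZMod.card] using this) 0 (by simp [hp.pos])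
    rw [mul_comm]
    simpa using this
  have T1 : Til (slab p s A) B f f :=
    ⟨by simp only [Fintype.card_prod, ZMod.card]; rw [mul_comm]; exact cards, inj1 s hs⟩
  have T2 := T1.tij p hp (not_dvd_aux hp hc hB cards)
  have inj2 : ∀ x, ∀ a ∈ slab p s A, ∀ a' ∈ slab p s A,
      ∀ b ∈ resc p x B, ∀ b' ∈ resc p x B,
      p • (a : ZMod N) + (b : ZMod N) = p • (a' : ZMod N) + (b' : ZMod N) → a = a' ∧ b = b' := by
    intro x a ha a' ha' b hb b' hb' e
    simp only [resc, Finset.mem_filter] at hb hb'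
    apply T2.2 a ha a' ha' b hb.1 b' hb'.1
    simp only [f, Prod.smul_mk, Prod.mk_add_mk, Prod.mk.injEq]
    refine ⟨e, ?_⟩
    have : (b : ZMod p) = (b' : ZMod p) := zeq.2 (dvc (dvd_sub hb.2 hb'.2) (by ring))
    rw [this]
    simp
  have cards2 : ∀ x, (slab p s A).card * (resc p x B).card = N := by
    apply resc_all p hp.pos B (fun Y => (slab p s A).card * Y.card = N)
    intro j hj
    rw [mul_comm]
    refine eq_of_sum_bound p (slab p s A).card N B.card (fun j => (resc p (j : ℤ) B).card)
      (card_resc p hp.pos B) (by rw [cards, mul_comm]) ?_ j hj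
    · intro j hj
      have := inj_bound (inj2 j)
      rw [ZMod.card] at this
      rw [mul_comm]; exact this
  have T3 : Til (slab p s A) (resc p x B) (fun a => p • (a : ZMod N)) (fun b => (b : ZMod N)) :=
    ⟨by rw [ZMod.card]; exact cards2 x, inj2 x⟩
  exact (TT_of_pmul hc T3.symm).symm


/-- vanishing of the exponential sum of `A` at all primitive `s`-th roots of unity -/
def Z (s : ℕ) (A : Finset ℤ) : Prop :=
  ∀ ζ : ℂ, IsPrimitiveRoot ζ s → ∑ a ∈ A, ζ ^ a = 0

theorem cyc_iff {s : ℕ} (hs : 0 < s) (P : Polynomial ℤ) {ζ : ℂ} (hζ : IsPrimitiveRoot ζ s) :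
    Polynomial.cyclotomic s ℤ ∣ P ↔ Polynomial.aeval ζ P = 0 := by
  rw [Polynomial.cyclotomic_eq_minpoly hζ hs]
  exact (minpoly.isIntegrallyClosed_dvd_iff (hζ.isIntegral hs) P).symm

theorem zpow_mod {s : ℕ} (hs : 0 < s) {ζ : ℂ} (hζ : ζ ^ s = 1) (a : ℤ) :
    ζ ^ a = ζ ^ (a % s).toNat := by
  have h0 : (0 : ℤ) < s := by exact_mod_cast hs
  rw [← zpow_natCast, Int.toNat_of_nonneg (Int.emod_nonneg a h0.ne')]
  have hz : ζ ≠ 0 := by rintro rfl; simp [hs.ne'] at hζ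
  conv_lhs => rw [← Int.emod_add_mul_ediv a s]
  rw [zpow_add₀ hz, zpow_mul, zpow_natCast, hζ, one_zpow, mul_one]

theorem zpow_congr {s : ℕ} (hs : 0 < s) {ζ : ℂ} (hζ : ζ ^ s = 1) {a b : ℤ}
    (h : (s : ℤ) ∣ a - b) : ζ ^ a = ζ ^ b := by
  rw [zpow_mod hs hζ a, zpow_mod hs hζ b,
    Int.emod_eq_emod_iff_emod_sub_eq_zero.2 (Int.emod_eq_zero_of_dvd h)]

theorem Z_of_one {s : ℕ} (hs : 0 < s) {A : Finset ℤ} {ζ : ℂ} (hζ : IsPrimitiveRoot ζ s)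
    (h : ∑ a ∈ A, ζ ^ a = 0) : Z s A := by
  intro ξ hξ
  have key : ∀ ζ : ℂ, IsPrimitiveRoot ζ s →
      Polynomial.aeval ζ (∑ a ∈ A, (Polynomial.X : Polynomial ℤ) ^ (a % s).toNat)
        = ∑ a ∈ A, ζ ^ a := by
    intro ζ hζ
    rw [map_sum]
    refine Finset.sum_congr rfl fun a _ => ?_
    rw [zpow_mod hs hζ.pow_eq_one a]
    simp
  rw [← key ξ hξ, ← cyc_iff hs _ hξ, cyc_iff hs _ hζ, key ζ hζ, h]

theorem Z_or {M s : ℕ} [NeZero M] {A B : Finset ℤ} (h : TT M A B) (hs : s ∣ M) (h1 : s ≠ 1) :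
    Z s A ∨ Z s B := by
  have hs0 : 0 < s := Nat.pos_of_dvd_of_pos hs (NeZero.pos M)
  have hζ := Complex.isPrimitiveRoot_exp s hs0.ne'
  obtain ⟨ζ, hζ'⟩ : ∃ ζ, ζ = Complex.exp (2 * Real.pi * Complex.I / s) := ⟨_, rfl⟩
  rw [← hζ'] at hζ
  have hz : ζ ≠ 0 := by rw [hζ']; exact Complex.exp_ne_zero _
  have hM : ζ ^ M = 1 := (hζ.pow_eq_one_iff_dvd M).2 hs
  have e : (∑ a ∈ A, ζ ^ a) * (∑ b ∈ B, ζ ^ b) = 0 := by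
    rw [Finset.sum_mul_sum, ← Finset.sum_product']
    have : ∑ x ∈ A ×ˢ B, ζ ^ x.1 * ζ ^ x.2 = ∑ i ∈ Finset.range M, ζ ^ i := by
      refine Finset.sum_bij (fun x _ => ((x.1 + x.2) % M).toNat) ?_ ?_ ?_ ?_
      · rintro ⟨a, b⟩ hx
        have h0 : (0 : ℤ) < M := by exact_mod_cast NeZero.pos M
        have h1 := Int.emod_nonneg (a + b) h0.ne'
        have h2 := Int.emod_lt_of_pos (a + b) h0
        simp; omega
      · rintro ⟨a, b⟩ hx ⟨a', b'⟩ hy hxy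
        simp only [Finset.mem_product] at hx hy
        have h0 : (0 : ℤ) < M := by exact_mod_cast NeZero.pos M
        have h1 := Int.emod_nonneg (a + b) h0.ne'
        have h2 := Int.emod_nonneg (a' + b') h0.ne'
        have h3 : (a + b) % M = (a' + b') % M := by simp at hxy; omega
        have := h.2 a hx.1 a' hy.1 b hx.2 b' hy.2
          (Int.dvd_of_emod_eq_zero (Int.emod_eq_emod_iff_emod_sub_eq_zero.1 h3))
        rw [this.1, this.2]
      · intro i hi
        obtain ⟨a, ha, b, hb, hab⟩ := h.surj (i : ℤ)
        refine ⟨(a, b), by simp [ha, hb], ?_⟩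
        have h3 := Int.emod_eq_emod_iff_emod_sub_eq_zero.2 (Int.emod_eq_zero_of_dvd hab)
        simp only [Finset.mem_range] at hi
        rw [Int.emod_eq_of_lt (a := (i : ℤ)) (by omega) (by omega)] at h3
        simp only [h3]; simp
      · rintro ⟨a, b⟩ hx
        simp only
        rw [← zpow_add₀ hz, zpow_mod (NeZero.pos M) hM]
    rw [this]
    have hne : ζ - 1 ≠ 0 := sub_ne_zero.2 (hζ.ne_one (by omega))
    have := geom_sum_mul ζ M
    rw [hM, sub_self] at this
    exact (mul_eq_zero.1 this).resolve_right hne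
  rcases mul_eq_zero.1 e with e | e
  · exact Or.inl (Z_of_one hs0 hζ e)
  · exact Or.inr (Z_of_one hs0 hζ e)

/-- Fourier piece at primitive `d`-th roots -/
noncomputable def Gd (A : Finset ℤ) (t : ℤ) (d : ℕ) : ℂ :=
  ∑ ζ ∈ primitiveRoots d ℂ, ∑ a ∈ A, ζ ^ (a - t)

theorem Gd_zero {A : Finset ℤ} {d : ℕ} (hd : 0 < d) (h : Z d A) (t : ℤ) : Gd A t d = 0 := by
  refine Finset.sum_eq_zero fun ζ hζ => ?_
  rw [mem_primitiveRoots hd] at hζ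
  have hz : ζ ≠ 0 := hζ.ne_zero hd.ne'
  simp only [zpow_sub₀ hz]
  rw [← Finset.sum_div, h ζ hζ, zero_div]

theorem Gd_one (A : Finset ℤ) (t : ℤ) : Gd A t 1 = A.card := by
  simp [Gd]

theorem roots_sum (s : ℕ) (hs : 0 < s) (n : ℤ) :
    ∑ ζ ∈ Polynomial.nthRootsFinset s (1 : ℂ), ζ ^ n = if (s : ℤ) ∣ n then (s : ℂ) else 0 := by
  have hω := Complex.isPrimitiveRoot_exp s hs.ne'
  obtain ⟨ω, hω'⟩ : ∃ ζ, ζ = Complex.exp (2 * Real.pi * Complex.I / s) := ⟨_, rfl⟩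
  rw [← hω'] at hω
  have hz : ω ≠ 0 := hω.ne_zero hs.ne'
  split_ifs with h
  · rw [Finset.sum_congr rfl (g := fun _ => (1 : ℂ))]
    · simp [hω.card_nthRootsFinset]
    · intro ζ hζ
      rw [Polynomial.mem_nthRootsFinset hs] at hζ
      have := zpow_congr hs hζ (a := n) (b := 0) (by simpa using h)
      simpa using this
  · have hne : ω ^ n - 1 ≠ 0 := by
      rw [sub_ne_zero]
      intro e
      exact h ((hω.zpow_eq_one_iff_dvd n).1 e)
    have e : ∑ ζ ∈ Polynomial.nthRootsFinset s (1 : ℂ), (ω * ζ) ^ n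
        = ∑ ζ ∈ Polynomial.nthRootsFinset s (1 : ℂ), ζ ^ n := by
      refine Finset.sum_nbij' (fun x => ω * x) (fun x => ω⁻¹ * x) ?_ ?_ ?_ ?_ ?_
      · intro x hx
        rw [Polynomial.mem_nthRootsFinset hs] at hx ⊢
        rw [mul_pow, hx, hω.pow_eq_one, one_mul]
      · intro x hx
        rw [Polynomial.mem_nthRootsFinset hs] at hx ⊢
        rw [mul_pow, hx, inv_pow, hω.pow_eq_one, inv_one, one_mul]
      · intro x _; field_simp
      · intro x _; field_simp
      · intro x _; rfl
    simp only [mul_zpow] at e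
    rw [← Finset.mul_sum] at e
    have : (ω ^ n - 1) * ∑ ζ ∈ Polynomial.nthRootsFinset s (1 : ℂ), ζ ^ n = 0 := by
      rw [sub_mul, e, one_mul, sub_self]
    exact (mul_eq_zero.1 this).resolve_left hne

theorem count (A : Finset ℤ) (t : ℤ) (s : ℕ) (hs : 0 < s) :
    (s : ℂ) * (resc s t A).card = ∑ d ∈ s.divisors, Gd A t d := by
  classical
  have h1 : ∑ d ∈ s.divisors, Gd A t d
      = ∑ ζ ∈ Polynomial.nthRootsFinset s (1 : ℂ), ∑ a ∈ A, ζ ^ (a - t) := by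
    rw [IsPrimitiveRoot.nthRoots_one_eq_biUnion_primitiveRoots, Finset.sum_biUnion]
    · rfl
    · intro i _ j _ hij
      exact IsPrimitiveRoot.disjoint hij
  rw [h1, Finset.sum_comm]
  simp only [roots_sum s hs]
  rw [← Finset.sum_filter, Finset.sum_const, resc, nsmul_eq_mul, mul_comm]

theorem count_p {A : Finset ℤ} {p : ℕ} (hp : p.Prime) (t : ℤ) :
    (p : ℂ) * (resc p t A).card = A.card + Gd A t p := by
  rw [count A t p hp.pos, hp.sum_divisors, Gd_one, add_comm]

theorem cnt_p {A : Finset ℤ} {p : ℕ} (hp : p.Prime) (h : Z p A) (t : ℤ) :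
    p * (resc p t A).card = A.card := by
  have := count_p (A := A) hp t
  rw [Gd_zero hp.pos h, add_zero] at this
  exact_mod_cast this

theorem cnt_p2 {A : Finset ℤ} {p : ℕ} (hp : p.Prime) (h : Z (p ^ 2) A) (t : ℤ) :
    p * (resc (p ^ 2) t A).card = (resc p t A).card := by
  have h1 := count_p (A := A) hp t
  have h2 := count A t (p ^ 2) (pow_pos hp.pos 2)
  rw [Nat.sum_divisors_prime_pow hp, Finset.sum_range_succ, Finset.sum_range_succ,
    Finset.sum_range_one, Gd_zero (pow_pos hp.pos 2) h, pow_zero, pow_one, Gd_one, add_zero,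
    ← h1] at h2
  have h3 : p ^ 2 * (resc (p ^ 2) t A).card = p * (resc p t A).card := by exact_mod_cast h2
  apply Nat.eq_of_mul_eq_mul_left hp.pos
  rw [← h3]; ring

theorem count_pq {A : Finset ℤ} {p q : ℕ} (hp : p.Prime) (hq : q.Prime) (hpq : p ≠ q) (t : ℤ) :
    ((p * q : ℕ) : ℂ) * (resc (p * q) t A).card
      = A.card + Gd A t p + Gd A t q + Gd A t (p * q) := by
  have hd : (p * q).divisors = {1, p, q, p * q} := by
    ext d
    simp only [Nat.mem_divisors, Finset.mem_insert, Finset.mem_singleton]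
    constructor
    · rintro ⟨h, _⟩
      obtain ⟨a, b, ha, hb, hab⟩ := (Nat.dvd_mul).1 h
      subst hab
      rcases (Nat.dvd_prime hp).1 ha with rfl | rfl <;>
      rcases (Nat.dvd_prime hq).1 hb with rfl | rfl <;> simp
    · rintro (rfl | rfl | rfl | rfl) <;> simp [hp.ne_zero, hq.ne_zero]
  have n1 : p ≠ p * q := by
    intro e; have := hq.one_lt; have := hp.pos; nlinarith
  have n2 : q ≠ p * q := by
    intro e; have := hp.one_lt; have := hq.pos; nlinarith
  have n3 : 1 ≠ p * q := by
    intro e; have := hp.one_lt; have := hq.one_lt; nlinarith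
  rw [count A t _ (Nat.mul_pos hp.pos hq.pos), hd, Finset.sum_insert, Finset.sum_insert,
    Finset.sum_insert, Finset.sum_singleton, Gd_one]
  · ring
  · simp [n2]
  · simp [hpq, n1]
  · simp [hp.one_lt.ne, hq.one_lt.ne, n3]

theorem cnt_pq {A : Finset ℤ} {p q : ℕ} (hp : p.Prime) (hq : q.Prime) (hpq : p ≠ q)
    (h1 : Z p A) (h2 : Z q A) (h3 : Z (p * q) A) (t : ℤ) :
    p * q * (resc (p * q) t A).card = A.card := by
  have := count_pq (A := A) hp hq hpq t
  rw [Gd_zero hp.pos h1, Gd_zero hq.pos h2, Gd_zero (Nat.mul_pos hp.pos hq.pos) h3] at this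
  simp only [add_zero] at this
  exact_mod_cast this

theorem cnt_pq' {A : Finset ℤ} {p q : ℕ} (hp : p.Prime) (hq : q.Prime) (hpq : p ≠ q)
    (h3 : Z (p * q) A) (t : ℤ) :
    p * q * (resc (p * q) t A).card + A.card = p * (resc p t A).card + q * (resc q t A).card := by
  have := count_pq (A := A) hp hq hpq t
  rw [Gd_zero (Nat.mul_pos hp.pos hq.pos) h3, add_zero] at this
  have e1 := count_p (A := A) hp t
  have e2 := count_p (A := A) hq t
  have e3 : ((p * q : ℕ) : ℂ) * (resc (p * q) t A).card + A.card
     = p * (resc p t A).card + q * (resc q t A).card := by rw [this, e1, e2]; ring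
  exact_mod_cast e3

theorem Z_excl {M p : ℕ} [NeZero M] (hp : p.Prime) (hpM : p ^ 2 ∣ M) {A B : Finset ℤ}
    (h : TT M A B) (hA : ¬ p ^ 2 ∣ A.card) (hB : ¬ p ^ 2 ∣ B.card) (e : ℕ) (he : 1 ≤ e)
    (he2 : p ^ e ∣ M) (he3 : e ≤ 2) : ¬ (Z (p ^ e) A ∧ Z (p ^ e) B) := by
  have key : ∀ A : Finset ℤ, Z p A → Z (p ^ 2) A → p ^ 2 ∣ A.card := by
    intro A h1 h2
    have e1 := cnt_p hp h1 0
    rw [← cnt_p2 hp h2 0] at e1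
    exact ⟨(resc (p ^ 2) 0 A).card, by rw [← e1]; ring⟩
  have hp1 : p ^ 1 ∣ M := (pow_dvd_pow p (by norm_num)).trans hpM
  have o1 := Z_or h (pow_one p ▸ hp1) hp.one_lt.ne'
  have o2 := Z_or h hpM (Nat.one_lt_pow (by norm_num) hp.one_lt).ne'
  have k1 := key A
  have k2 := key B
  have : e = 1 ∨ e = 2 := by omega
  rcases this with rfl | rfl
  · rw [pow_one]; tauto
  · tauto


theorem sel0 (p : ℕ) : Sel p (fun t => t % p) := by
  refine ⟨fun t => Int.dvd_self_sub_emod, fun t t' h => ?_⟩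
  exact Int.emod_eq_emod_iff_emod_sub_eq_zero.2 (Int.emod_eq_zero_of_dvd h)

theorem Z_of_slab {p m : ℕ} (hp : 0 < p) {A : Finset ℤ} (h : ∀ s, Sel p s → Z m (slab p s A)) :
    Z m A := by
  intro ζ hζ
  rw [← sum_slab p hp _ (sel0 p) A]
  exact Finset.sum_eq_zero fun j _ => h _ ((sel0 p).shift j) ζ hζ

theorem Z_of_resc {p m : ℕ} (hp : 0 < p) {A : Finset ℤ} (h : ∀ x, Z m (resc p x A)) :
    Z m A := by
  intro ζ hζ
  rw [← sum_resc p hp A]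
  exact Finset.sum_eq_zero fun j _ => h _ ζ hζ

theorem resc_const {p : ℕ} (hp : 1 < p) {B : Finset ℤ} {ρ κ C : ℂ} (hκ : IsPrimitiveRoot κ p)
    (h : ∀ x, ∑ b ∈ resc p x B, ρ ^ b = C) : ∑ b ∈ B, (κ * ρ) ^ b = 0 := by
  have h0 : 0 < p := by omega
  rw [← sum_resc p h0 B]
  have : ∀ j ∈ Finset.range p, ∑ b ∈ resc p (j : ℤ) B, (κ * ρ) ^ b = κ ^ j * C := by
    intro j _
    rw [← h j, Finset.mul_sum]
    refine Finset.sum_congr rfl fun b hb => ?_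
    simp only [resc, Finset.mem_filter] at hb
    rw [mul_zpow, zpow_congr h0 hκ.pow_eq_one hb.2, zpow_natCast]
  rw [Finset.sum_congr rfl this, ← Finset.sum_mul, hκ.geom_sum_eq_zero hp, zero_mul]

theorem slab_const {p : ℕ} (hp : 1 < p) {A : Finset ℤ} {ρ κ C : ℂ} (hκ : IsPrimitiveRoot κ (p ^ 2))
    (h : ∀ s, Sel p s → ∑ a ∈ slab p s A, ρ ^ a = C) : ∑ a ∈ A, (κ * ρ) ^ a = 0 := by
  have h0 : 0 < p := by omega
  have h02 : 0 < p ^ 2 := pow_pos h0 2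
  have hpp : (p : ℤ) ∣ (p : ℤ) ^ 2 := Dvd.intro_left (p : ℤ) (by ring)
  have hκp : IsPrimitiveRoot (κ ^ p) p := hκ.pow h02 (by ring)
  have hκ0 : κ ≠ 0 := hκ.ne_zero h02.ne'
  let H : ℤ → ℂ := fun t => ∑ a ∈ A.filter (fun a => (p : ℤ) ^ 2 ∣ a - t), ρ ^ a
  have hstep : ∀ t, H (t + p) = H t := by
    intro t
    have key : ∀ t t' : ℤ, (p : ℤ) ∣ t' - t →
        C = H t' + ∑ a ∈ A.filter (fun a => ¬ (p : ℤ) ∣ a - t ∧ (p : ℤ) ^ 2 ∣ a - a % p), ρ ^ a := by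
      intro t t' htt
      have hs : Sel p (fun u => if (p : ℤ) ∣ u - t then t' else u % p) := by
        constructor
        · intro u
          beta_reduce
          split_ifs with hu
          · exact dvc (dvd_sub hu htt) (by ring)
          · exact (sel0 p).1 u
        · intro u u' huu
          have : (p : ℤ) ∣ u - t ↔ (p : ℤ) ∣ u' - t :=
            ⟨fun hh => dvc (dvd_sub hh huu) (by ring), fun hh => dvc (dvd_add hh huu) (by ring)⟩
          simp only [this]
          split_ifs
          · rfl
          · exact (sel0 p).2 u u' huu
      rw [← h _ hs]
      simp only [H, slab, Finset.sum_filter, ← Finset.sum_add_distrib]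
      refine Finset.sum_congr rfl fun a _ => ?_
      by_cases ha : (p : ℤ) ∣ a - t
      · simp [ha]
      · have : ¬ (p : ℤ) ^ 2 ∣ a - t' := fun hh =>
          ha (dvc (dvd_add (hpp.trans hh) htt) (by ring))
        simp [ha, this]
    have k1 := key t t (by simp)
    have k2 := key t (t + p) (by simp)
    rw [k1] at k2
    exact (add_right_cancel k2).symm
  have hstep2 : ∀ (t : ℤ) (j : ℕ), H (t + p * j) = H t := by
    intro t j
    induction j with
    | zero => simp
    | succ j ih => rw [← ih, ← hstep (t + p * j)]; congr 1; push_cast; ring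
  let s0 : ℤ → ℤ := fun t => t % p
  have hW : ∀ j : ℕ, ∑ a ∈ slab p (fun t => s0 t + p * (j : ℤ)) A, (κ * ρ) ^ a
      = (κ ^ p) ^ j * ∑ u ∈ Finset.range p, κ ^ u * H u := by
    intro j
    rw [← sum_resc p h0, Finset.mul_sum]
    refine Finset.sum_congr rfl fun u hu => ?_
    rw [← hstep2 u j]
    simp only [H, Finset.mul_sum]
    have e : resc p (u : ℤ) (slab p (fun t => s0 t + p * (j : ℤ)) A)
        = A.filter (fun a => (p : ℤ) ^ 2 ∣ a - (u + p * j)) := by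
      ext a
      simp only [resc, slab, Finset.mem_filter, and_assoc]
      refine and_congr_right fun _ => ?_
      have hu' : (u : ℤ) % p = u := by
        rw [Finset.mem_range] at hu
        exact Int.emod_eq_of_lt (by omega) (by omega)
      constructor
      · rintro ⟨h1, h2⟩
        have := (sel0 p).2 a u h2
        simp only [hu'] at this
        simpa only [s0, this] using h1
      · intro h1
        have h2 : (p : ℤ) ∣ a - u := dvc (dvd_add (hpp.trans h1) (Dvd.intro (j : ℤ) rfl)) (by ring)
        have := (sel0 p).2 a u h2
        simp only [hu'] at this
        refine ⟨?_, h2⟩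
        simpa only [s0, this] using h1
    rw [e]
    refine Finset.sum_congr rfl fun a ha => ?_
    simp only [Finset.mem_filter] at ha
    have := zpow_congr h02 hκ.pow_eq_one (a := a) (b := u + p * j) (by push_cast; exact ha.2)
    rw [mul_zpow, this, zpow_add₀ hκ0, zpow_natCast, zpow_mul, zpow_natCast, zpow_natCast]
    ring
  rw [← sum_slab p h0 _ (sel0 p) A, Finset.sum_congr rfl (fun j _ => hW j), ← Finset.sum_mul,
    hκp.geom_sum_eq_zero hp, zero_mul]

theorem prim_mul {a b : ℕ} {κ ρ : ℂ} (h1 : IsPrimitiveRoot κ a) (h2 : IsPrimitiveRoot ρ b)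
    (hc : Nat.Coprime a b) : IsPrimitiveRoot (κ * ρ) (a * b) := by
  have e1 := h1.eq_orderOf
  have e2 := h2.eq_orderOf
  rw [e1, e2] at hc ⊢
  rw [← (Commute.all κ ρ).orderOf_mul_eq_mul_orderOf_of_coprime hc]
  exact IsPrimitiveRoot.orderOf _

theorem exists_prim (m : ℕ) (hm : 0 < m) : ∃ ζ : ℂ, IsPrimitiveRoot ζ m :=
  ⟨_, Complex.isPrimitiveRoot_exp m hm.ne'⟩

theorem Z_mul_resc {p m : ℕ} (hp : 1 < p) (hm : 0 < m) (hc : Nat.Coprime p m) {B : Finset ℤ}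
    (h : ∀ x, Z m (resc p x B)) : Z (p * m) B := by
  obtain ⟨κ, hκ⟩ := exists_prim p (by omega)
  obtain ⟨ρ, hρ⟩ := exists_prim m hm
  refine Z_of_one (Nat.mul_pos (by omega) hm) (prim_mul hκ hρ hc) ?_
  exact resc_const hp hκ (fun x => h x ρ hρ)

theorem Z_mul_slab {p m : ℕ} (hp : 1 < p) (hm : 0 < m) (hc : Nat.Coprime p m) {A : Finset ℤ}
    (h : ∀ s, Sel p s → Z m (slab p s A)) : Z (p ^ 2 * m) A := by
  have h2 : 0 < p ^ 2 := pow_pos (by omega) 2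
  obtain ⟨κ, hκ⟩ := exists_prim (p ^ 2) h2
  obtain ⟨ρ, hρ⟩ := exists_prim m hm
  refine Z_of_one (Nat.mul_pos h2 hm) (prim_mul hκ hρ (Nat.Coprime.pow_left 2 hc)) ?_
  exact slab_const hp hκ (fun s hs => h s hs ρ hρ)

theorem Z_resc_card {p c : ℕ} (hp : 1 < p) {B : Finset ℤ} (h : ∀ x, (resc p x B).card = c) :
    Z p B := by
  obtain ⟨κ, hκ⟩ := exists_prim p (by omega)
  refine Z_of_one (by omega) hκ ?_
  have := resc_const (B := B) (ρ := 1) (C := c) hp hκ (fun x => by simp [h])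
  simpa using this

theorem Z_slab_card {p c : ℕ} (hp : 1 < p) {A : Finset ℤ}
    (h : ∀ s, Sel p s → (slab p s A).card = c) : Z (p ^ 2) A := by
  have h2 : 0 < p ^ 2 := pow_pos (by omega) 2
  obtain ⟨κ, hκ⟩ := exists_prim (p ^ 2) h2
  refine Z_of_one h2 hκ ?_
  have := slab_const (A := A) (ρ := 1) (C := c) hp hκ (fun x hx => by simp [h x hx])
  simpa using this

/-- the condition (T2) -/
def T2i (M : ℕ) (A : Finset ℤ) : Prop :=
  ∀ m, m ∣ M → m ≠ 1 → (∀ l : ℕ, l.Prime → l ∣ m → Z (l ^ m.factorization l) A) → Z m A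

theorem red_cards {p N : ℕ} [NeZero N] {A B : Finset ℤ} (hp : p.Prime) (h : Red p N A B) :
    ∃ c d, (∀ s, Sel p s → (slab p s A).card = c) ∧ (∀ x, (resc p x B).card = d) ∧
      p * c = A.card ∧ p * d = B.card := by
  have hN := NeZero.pos N
  have H := fun s hs x => (h s hs x).1
  have s0 := sel0 p
  have hd : ∀ x, (resc p x B).card = (resc p 0 B).card := by
    intro x
    have e1 := H _ s0 x
    have e2 := H _ s0 0
    have : 0 < (slab p (fun t => t % p) A).card := by
      rcases Nat.eq_zero_or_pos (slab p (fun t => t % p) A).card with h0 | h0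
      · rw [h0, zero_mul] at e1; omega
      · exact h0
    exact Nat.eq_of_mul_eq_mul_left this (e1.trans e2.symm)
  have hc : ∀ s, Sel p s → (slab p s A).card = (slab p (fun t => t % p) A).card := by
    intro s hs
    have e1 := H _ hs 0
    have e2 := H _ s0 0
    have : 0 < (resc p 0 B).card := by
      rcases Nat.eq_zero_or_pos (resc p 0 B).card with h0 | h0
      · rw [h0, mul_zero] at e1; omega
      · exact h0
    exact Nat.eq_of_mul_eq_mul_right this (e1.trans e2.symm)
  refine ⟨_, _, hc, hd, ?_, ?_⟩
  · rw [← card_slab p hp.pos _ s0 A, Finset.sum_congr rfl (fun (j : ℕ) _ => hc _ (s0.shift (j : ℤ)))]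
    simp
  · rw [← card_resc p hp.pos B, Finset.sum_congr rfl (fun j _ => hd _)]
    simp

theorem T2_step {M p N : ℕ} [NeZero N] (hp : p.Prime) (hM : M = p ^ 2 * N)
    (hc : Nat.Coprime p N) {A B : Finset ℤ} (hR : Red p N A B)
    (hE : ∀ l e, l.Prime → 1 ≤ e → l ^ e ∣ M → ¬ (Z (l ^ e) A ∧ Z (l ^ e) B))
    (hA : ∀ s, Sel p s → T2i N (slab p s A)) (hB : ∀ x, T2i N (resc p x B)) :
    T2i M A ∧ T2i M B := by
  obtain ⟨c, d, hcA, hdB, -, -⟩ := red_cards hp hR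
  have hZA : Z (p ^ 2) A := Z_slab_card hp.one_lt hcA
  have hZB : Z p B := Z_resc_card hp.one_lt hdB
  have hM0 : M ≠ 0 := by rw [hM]; exact mul_ne_zero (pow_ne_zero _ hp.ne_zero) (NeZero.ne N)
  have dec : ∀ m, m ∣ M → m ≠ 1 → ∃ i m', i ≤ 2 ∧ m = p ^ i * m' ∧ i = m.factorization p ∧
      Nat.Coprime p m' ∧ m' ∣ N ∧ 0 < m' ∧ ∀ l : ℕ, l.Prime → l ∣ m' →
        m.factorization l = m'.factorization l ∧ l ∣ m ∧ 1 ≤ m'.factorization l ∧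
        l ^ m'.factorization l ∣ m' := by
    intro m hm h1
    have hm0 : m ≠ 0 := fun h => hM0 (by rw [h] at hm; exact Nat.eq_zero_of_zero_dvd hm)
    have hcop := Nat.coprime_ordCompl hp hm0
    have hmm := Nat.ordProj_mul_ordCompl_eq_self m p
    have hm'0 := (Nat.ordCompl_pos p hm0)
    refine ⟨m.factorization p, m / p ^ m.factorization p, ?_, hmm.symm, rfl, hcop, ?_, hm'0, ?_⟩
    · have h1 : p ^ m.factorization p ∣ p ^ 2 * N := hM ▸ (Nat.ordProj_dvd m p).trans hm
      have h2 : p ^ m.factorization p ∣ p ^ 2 :=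
        Nat.Coprime.dvd_of_dvd_mul_right (Nat.Coprime.pow_left _ hc) h1
      exact (Nat.pow_dvd_pow_iff_le_right hp.one_lt).1 h2
    · have h1 : m / p ^ m.factorization p ∣ p ^ 2 * N := hM ▸ (Nat.ordCompl_dvd m p).trans hm
      exact Nat.Coprime.dvd_of_dvd_mul_left (Nat.Coprime.pow_right 2 hcop.symm) h1
    · intro l hl hlm
      have hlp : l ≠ p := by
        rintro rfl
        exact (Nat.Prime.coprime_iff_not_dvd hl).1 hcop hlm
      refine ⟨?_, hlm.trans (Nat.ordCompl_dvd m p), ?_, Nat.ordProj_dvd _ _⟩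
      · rw [Nat.factorization_ordCompl, Finsupp.erase_ne hlp]
      · exact (hl.dvd_iff_one_le_factorization hm'0.ne').1 hlm
  have lift : ∀ l e, l.Prime → 1 ≤ e → l ^ e ∣ N → l ^ e ∣ M ∧ l ^ e ≠ 1 := by
    intro l e hl he h
    exact ⟨hM ▸ h.mul_left _, (Nat.one_lt_pow (by omega) hl.one_lt).ne'⟩
  constructor
  · intro m hm hm1 hyp
    obtain ⟨i, m', hi, e, ei, hcop, hmN, hm0, hl⟩ := dec m hm hm1
    by_cases hm' : m' = 1
    · have hi0 : i ≠ 0 := by rintro rfl; simp [hm'] at e; exact hm1 e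
      have := hyp p hp (by rw [e]; exact (dvd_pow_self p hi0).mul_right _)
      rw [← ei] at this
      rw [e, hm', mul_one]; exact this
    · have hz : ∀ s, Sel p s → Z m' (slab p s A) := by
        intro s hs
        refine hA s hs m' hmN hm' fun l hlp hlm => ?_
        obtain ⟨f1, f2, f3, f4⟩ := hl l hlp hlm
        have g1 := hyp l hlp f2
        rw [f1] at g1
        obtain ⟨g2, g4⟩ := lift l _ hlp f3 (f4.trans hmN)
        have g3 : ¬ Z (l ^ m'.factorization l) B := fun hh => hE l _ hlp f3 g2 ⟨g1, hh⟩
        have : ∃ x, ¬ Z (l ^ m'.factorization l) (resc p x B) := by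
          by_contra hcon
          push Not at hcon
          exact g3 (Z_of_resc hp.pos hcon)
        obtain ⟨x, hx⟩ := this
        exact (Z_or (hR s hs x) (f4.trans hmN) g4).resolve_right hx
      interval_cases i
      · rw [e, pow_zero, one_mul]
        exact Z_of_slab hp.pos hz
      · exfalso
        have := hyp p hp (by rw [e, pow_one]; exact dvd_mul_right _ _)
        rw [← ei] at this
        refine hE p 1 hp le_rfl ?_ ⟨this, by rw [pow_one]; exact hZB⟩
        rw [hM, pow_two, pow_one, mul_assoc]; exact dvd_mul_right _ _
      · rw [e]
        exact Z_mul_slab hp.one_lt hm0 hcop hz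
  · intro m hm hm1 hyp
    obtain ⟨i, m', hi, e, ei, hcop, hmN, hm0, hl⟩ := dec m hm hm1
    by_cases hm' : m' = 1
    · have hi0 : i ≠ 0 := by rintro rfl; simp [hm'] at e; exact hm1 e
      have := hyp p hp (by rw [e]; exact (dvd_pow_self p hi0).mul_right _)
      rw [← ei] at this
      rw [e, hm', mul_one]; exact this
    · have hz : ∀ x, Z m' (resc p x B) := by
        intro x
        refine hB x m' hmN hm' fun l hlp hlm => ?_
        obtain ⟨f1, f2, f3, f4⟩ := hl l hlp hlm
        have g1 := hyp l hlp f2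
        rw [f1] at g1
        obtain ⟨g2, g4⟩ := lift l _ hlp f3 (f4.trans hmN)
        have g3 : ¬ Z (l ^ m'.factorization l) A := fun hh => hE l _ hlp f3 g2 ⟨hh, g1⟩
        have : ∃ s, Sel p s ∧ ¬ Z (l ^ m'.factorization l) (slab p s A) := by
          by_contra hcon
          push Not at hcon
          exact g3 (Z_of_slab hp.pos hcon)
        obtain ⟨s, hs, hx⟩ := this
        exact (Z_or (hR s hs x) (f4.trans hmN) g4).resolve_left hx
      interval_cases i
      · rw [e, pow_zero, one_mul]
        exact Z_of_resc hp.pos hz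
      · rw [e, pow_one]
        exact Z_mul_resc hp.one_lt hm0 hcop hz
      · exfalso
        have := hyp p hp (by rw [e]; exact (dvd_pow_self p (by norm_num)).mul_right _)
        rw [← ei] at this
        refine hE p 2 hp (by norm_num) ?_ ⟨hZA, this⟩
        rw [hM]; exact dvd_mul_right _ _

theorem T2_base {r : ℕ} (hr : r.Prime) (A : Finset ℤ) : T2i (r ^ 2) A := by
  intro m hm h1 hyp
  obtain ⟨k, hk, rfl⟩ := (Nat.dvd_prime_pow hr).1 hm
  have hk0 : k ≠ 0 := by rintro rfl; simp at h1
  have := hyp r hr (dvd_pow_self r hk0)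
  simpa [hr.factorization_pow] using this


theorem hE_sq {M K : ℕ} [NeZero M] {A B : Finset ℤ} (h : TT M A B) (hK : Squarefree K)
    (hA : A.card = K) (hB : B.card = K) :
    ∀ l e, l.Prime → 1 ≤ e → l ^ e ∣ M → ¬ (Z (l ^ e) A ∧ Z (l ^ e) B) := by
  intro l e hl he hd
  have hM : M = K ^ 2 := by rw [← h.1, hA, hB, pow_two]
  have hn : ¬ l ^ 2 ∣ K := by
    intro hh
    rw [pow_two] at hh
    exact hl.one_lt.ne' (Nat.isUnit_iff.1 (hK l hh))
  have hK0 : K ≠ 0 := hK.ne_zero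
  have hlK : l ∣ K := by
    have : l ∣ K ^ 2 := hM ▸ (dvd_pow_self l (by omega)).trans hd
    exact hl.dvd_of_dvd_pow this
  have h2 : l ^ 2 ∣ M := hM ▸ pow_dvd_pow_of_dvd hlK 2
  have he2 : e ≤ 2 := by
    have h3 := (hl.pow_dvd_iff_le_factorization (NeZero.ne M)).1 hd
    rw [hM, Nat.factorization_pow] at h3
    have h4 : ¬ 2 ≤ K.factorization l := fun hh =>
      hn ((hl.pow_dvd_iff_le_factorization hK0).2 hh)
    simp at h3
    omega
  exact Z_excl hl h2 h (hA ▸ hn) (hB ▸ hn) e he hd he2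

theorem pair_both {q r : ℕ} {A : Finset ℤ} (h1 : ∃ a ∈ A, ∃ a' ∈ A, ¬ (q : ℤ) ∣ a - a')
    (h2 : ∃ a ∈ A, ∃ a' ∈ A, ¬ (r : ℤ) ∣ a - a') :
    ∃ a ∈ A, ∃ a' ∈ A, ¬ (q : ℤ) ∣ a - a' ∧ ¬ (r : ℤ) ∣ a - a' := by
  obtain ⟨a1, m1, a2, m2, n1⟩ := h1
  obtain ⟨a3, m3, a4, m4, n2⟩ := h2
  simp only [← zeq] at *
  by_cases e : (a1 : ZMod r) = (a2 : ZMod r)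
  · have : ∃ a ∈ A, (a : ZMod r) ≠ (a1 : ZMod r) := by
      by_cases e3 : (a3 : ZMod r) = a1
      · exact ⟨a4, m4, fun e4 => n2 (e3.trans e4.symm)⟩
      · exact ⟨a3, m3, e3⟩
    obtain ⟨a, m, n⟩ := this
    by_cases e5 : (a : ZMod q) = a1
    · exact ⟨a, m, a2, m2, fun e6 => n1 (e5.symm.trans e6), fun e7 => n (e7.trans e.symm)⟩
    · exact ⟨a, m, a1, m1, e5, n⟩
  · exact ⟨a1, m1, a2, m2, n1, e⟩

theorem sq_not {p : ℕ} {x : ℤ} (h : ¬ (p : ℤ) ∣ x) : ¬ (p : ℤ) ^ 2 ∣ x := fun hh =>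
  h ((Dvd.intro_left (p : ℤ) (by ring) : (p : ℤ) ∣ (p : ℤ) ^ 2).trans hh)

theorem gcd_sq_not {p : ℕ} (hp : p.Prime) {x y : ℤ} (h : ¬ (p : ℤ) ∣ x) (h' : ¬ (p : ℤ) ∣ y) :
    Int.gcd x ((p ^ 2 : ℕ) : ℤ) = Int.gcd y ((p ^ 2 : ℕ) : ℤ) :=
  gcd_sq_eq p hp x y (by simp [h, h']) (by simp [sq_not h, sq_not h'])

theorem two_coset {M q r : ℕ} [NeZero M] (hq : q.Prime) (hr : r.Prime) (hqr : q ≠ r)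
    (hM : M = q ^ 2 * r ^ 2) {A B : Finset ℤ} (h : TT M A B) (hA : A.card = q * r)
    (hB : B.card = q * r) (hco : ∀ a ∈ A, ∀ a' ∈ A, (q : ℤ) ∣ a - a') : T2i M A ∧ T2i M B := by
  have : NeZero (r ^ 2) := ⟨pow_ne_zero _ hr.ne_zero⟩
  have hc : Nat.Coprime q r := (Nat.coprime_primes hq hr).2 hqr
  have hc2 : Nat.Coprime q (r ^ 2) := Nat.Coprime.pow_right 2 hc
  have hsq : Squarefree (q * r) :=
    (Nat.squarefree_mul hc).2 ⟨hq.prime.irreducible.squarefree, hr.prime.irreducible.squarefree⟩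
  have hR : Red q (r ^ 2) A B := red_of_Hs hq hM hc2 h (hA ▸ dvd_mul_right _ _)
    (fun a ha a' ha' _ _ _ _ _ => hco a ha a' ha')
  exact T2_step hq hM hc2 hR (hE_sq h hsq hA hB) (fun s _ => T2_base hr _)
    (fun x => T2_base hr _)

theorem T2_two {M q r : ℕ} [NeZero M] (hq : q.Prime) (hr : r.Prime) (hqr : q ≠ r)
    (hM : M = q ^ 2 * r ^ 2) {A B : Finset ℤ} (h : TT M A B) (hA : A.card = q * r)
    (hB : B.card = q * r) : T2i M A ∧ T2i M B := by
  have hM' : M = r ^ 2 * q ^ 2 := by rw [hM]; ring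
  have hA' : A.card = r * q := by rw [hA]; ring
  have hB' : B.card = r * q := by rw [hB]; ring
  by_cases c1 : ∀ a ∈ A, ∀ a' ∈ A, (q : ℤ) ∣ a - a'
  · exact two_coset hq hr hqr hM h hA hB c1
  by_cases c2 : ∀ a ∈ A, ∀ a' ∈ A, (r : ℤ) ∣ a - a'
  · exact two_coset hr hq hqr.symm hM' h hA' hB' c2
  by_cases c3 : ∀ a ∈ B, ∀ a' ∈ B, (q : ℤ) ∣ a - a'
  · exact (two_coset hq hr hqr hM h.symm hB hA c3).symm
  by_cases c4 : ∀ a ∈ B, ∀ a' ∈ B, (r : ℤ) ∣ a - a'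
  · exact (two_coset hr hq hqr.symm hM' h.symm hB' hA' c4).symm
  exfalso
  push Not at c1 c2 c3 c4
  obtain ⟨a, ha, a', ha', n1, n2⟩ := pair_both c1 c2
  obtain ⟨b, hb, b', hb', n3, n4⟩ := pair_both c3 c4
  have hc : Nat.Coprime q r := (Nat.coprime_primes hq hr).2 hqr
  have := h.sands ha ha' hb hb' (by
    rw [hM]
    exact gcd_mul_eq _ _ (Nat.Coprime.pow 2 2 hc) _ _ (gcd_sq_not hq n1 n3) (gcd_sq_not hr n2 n4))
  exact n1 (by simp [this.1])

/-- three primes, given a reduction -/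
theorem T2_three_red {M p q r : ℕ} [NeZero M] (hp : p.Prime) (hq : q.Prime) (hr : r.Prime)
    (hpq : p ≠ q) (hpr : p ≠ r) (hqr : q ≠ r)
    (hM : M = p ^ 2 * (q ^ 2 * r ^ 2)) {A B : Finset ℤ} (h : TT M A B)
    (hA : A.card = p * (q * r)) (hB : B.card = p * (q * r)) (hR : Red p (q ^ 2 * r ^ 2) A B) :
    T2i M A ∧ T2i M B := by
  have : NeZero (q ^ 2 * r ^ 2) :=
    ⟨mul_ne_zero (pow_ne_zero _ hq.ne_zero) (pow_ne_zero _ hr.ne_zero)⟩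
  have c1 : Nat.Coprime p q := (Nat.coprime_primes hp hq).2 hpq
  have c2 : Nat.Coprime p r := (Nat.coprime_primes hp hr).2 hpr
  have c3 : Nat.Coprime q r := (Nat.coprime_primes hq hr).2 hqr
  have hc : Nat.Coprime p (q ^ 2 * r ^ 2) :=
    Nat.Coprime.mul_right (Nat.Coprime.pow_right 2 c1) (Nat.Coprime.pow_right 2 c2)
  have hsq : Squarefree (p * (q * r)) :=
    (Nat.squarefree_mul (Nat.Coprime.mul_right c1 c2)).2 ⟨hp.prime.irreducible.squarefree,
      (Nat.squarefree_mul c3).2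
      ⟨hq.prime.irreducible.squarefree, hr.prime.irreducible.squarefree⟩⟩
  obtain ⟨c, d, hc1, hd1, hc2, hd2⟩ := red_cards hp hR
  have ec : c = q * r := Nat.eq_of_mul_eq_mul_left hp.pos (hc2.trans hA)
  have ed : d = q * r := Nat.eq_of_mul_eq_mul_left hp.pos (hd2.trans hB)
  refine T2_step hp hM hc hR (hE_sq h hsq hA hB) (fun s hs => ?_) (fun x => ?_)
  · exact (T2_two hq hr hqr rfl (hR s hs 0) (by rw [hc1 s hs, ec]) (by rw [hd1, ed])).1
  · exact (T2_two hq hr hqr rfl (hR _ (sel0 p) x) (by rw [hc1 _ (sel0 p), ec])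
      (by rw [hd1, ed])).2


theorem crt2 {p N : ℕ} (hc : Nat.Coprime p N) (u v : ℤ) :
    ∃ z : ℤ, (p : ℤ) ∣ z - u ∧ (N : ℤ) ∣ z - v := by
  obtain ⟨a, b, hab⟩ := Nat.isCoprime_iff_coprime.2 hc
  exact ⟨v + b * N * (u - v),
    ⟨a * (v - u), by linear_combination (v - u) * (-hab)⟩, ⟨b * (u - v), by ring⟩⟩

theorem surj_of_not_Hs {M p N : ℕ} [NeZero M] (hp : p.Prime) (hM : M = p ^ 2 * N)
    (hc : Nat.Coprime p N) {A B : Finset ℤ} (h : TT M A B) (H : ¬ Hs p N A B) (x : ℤ) :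
    ∃ a ∈ A, (p : ℤ) ∣ a - x := by
  unfold Hs at H
  push Not at H
  obtain ⟨a, ha, a', ha', b, hb, b', hb', hN, hna⟩ := H
  have hbb := (h.split1 hp hM hc ha ha' hb hb' hN).resolve_left hna
  obtain ⟨z, hz1, hz2⟩ := crt2 hc (x + b) (a + b)
  obtain ⟨a2, ha2, b2, hb2, hz⟩ := h.surj z
  have hMp : (p : ℤ) ∣ (M : ℤ) := by rw [hM]; push_cast; exact ⟨p * N, by ring⟩
  have hMN : (N : ℤ) ∣ (M : ℤ) := by rw [hM]; push_cast; exact ⟨p ^ 2, by ring⟩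
  have n1 : (N : ℤ) ∣ (a2 + b2) - (a + b) := dvc (dvd_add (hMN.trans hz) hz2) (by ring)
  have n2 : (N : ℤ) ∣ (a2 + b2) - (a' + b') := dvc (dvd_add n1 hN) (by ring)
  have k : (p : ℤ) ∣ b2 - b → ∃ a ∈ A, (p : ℤ) ∣ a - x := fun hh =>
    ⟨a2, ha2, dvc (dvd_sub (dvd_add (hMp.trans hz) hz1) hh) (by ring)⟩
  rcases h.split1 hp hM hc ha2 ha hb2 hb n1 with e1 | e1
  · rcases h.split1 hp hM hc ha2 ha' hb2 hb' n2 with e2 | e2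
    · exact absurd (dvc (dvd_sub e2 e1) (by ring)) hna
    · exact k (dvc (dvd_sub e2 hbb) (by ring))
  · exact k e1

theorem center_abs {α β γ : Type} (S : Finset ℤ) (X : ℤ → α) (Y : ℤ → β) (W : ℤ → γ)
    (hno : ∀ a ∈ S, ∀ a' ∈ S, X a = X a' ∨ Y a = Y a' ∨ W a = W a')
    (hX : ∀ x, ∃ a ∈ S, X a = x) (hY : ∀ y, ∃ a ∈ S, Y a = y) (hW : ∀ w, ∃ a ∈ S, W a = w)
    (oX : ∀ u v : α, ∃ x, x ≠ u ∧ x ≠ v) (oY : ∀ u : β, ∃ x, x ≠ u) (oW : ∀ u : γ, ∃ x, x ≠ u)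
    [Nonempty α] :
    ∃ c1 c2 c3, ∀ a ∈ S, (X a = c1 ∧ Y a = c2) ∨ (X a = c1 ∧ W a = c3) ∨ (Y a = c2 ∧ W a = c3) := by
  classical
  choose f hfS hfX using hX
  have hE : ∃ y0 w0, ∀ a ∈ S, Y a = y0 ∨ W a = w0 := by
    by_cases c1 : ∀ x x', Y (f x) = Y (f x')
    · obtain ⟨x0⟩ := ‹Nonempty α›
      obtain ⟨y1, hy1⟩ := oY (Y (f x0))
      obtain ⟨g, hg, hgy⟩ := hY y1
      refine ⟨Y (f x0), W g, fun a ha => ?_⟩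
      by_contra hcon
      push Not at hcon
      obtain ⟨x, hx1, hx2⟩ := oX (X g) (X a)
      have k1 := hno (f x) (hfS x) g hg
      have k2 := hno (f x) (hfS x) a ha
      rw [hfX, c1 x x0] at k1 k2
      have : W g = W a := by
        rw [← (k1.resolve_left hx1).resolve_left (by rw [hgy]; exact hy1.symm),
          ← (k2.resolve_left hx2).resolve_left hcon.1.symm]
      exact hcon.2 this.symm
    by_cases c2 : ∀ x x', W (f x) = W (f x')
    · obtain ⟨x0⟩ := ‹Nonempty α›
      obtain ⟨y1, hy1⟩ := oW (W (f x0))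
      obtain ⟨g, hg, hgy⟩ := hW y1
      refine ⟨Y g, W (f x0), fun a ha => ?_⟩
      by_contra hcon
      push Not at hcon
      obtain ⟨x, hx1, hx2⟩ := oX (X g) (X a)
      have k1 := hno (f x) (hfS x) g hg
      have k2 := hno (f x) (hfS x) a ha
      rw [hfX, c2 x x0] at k1 k2
      have : Y g = Y a := by
        rw [← (k1.resolve_left hx1).resolve_right (by rw [hgy]; exact hy1.symm),
          ← (k2.resolve_left hx2).resolve_right hcon.2.symm]
      exact hcon.1 this.symm
    exfalso
    push Not at c1 c2
    obtain ⟨x1, x2, n1⟩ := c1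
    obtain ⟨x3, x4, n2⟩ := c2
    have key : ∀ x x', Y (f x) = Y (f x') ∨ W (f x) = W (f x') := by
      intro x x'
      by_cases e : x = x'
      · subst e; simp
      · have := hno (f x) (hfS x) (f x') (hfS x')
        rw [hfX, hfX] at this
        exact this.resolve_left e
    have k12 := key x1 x2
    have k34 := key x3 x4
    have k13 := key x1 x3
    have k14 := key x1 x4
    have k23 := key x2 x3
    have k24 := key x2 x4
    grind
  obtain ⟨y0, w0, hyw⟩ := hE
  obtain ⟨y1, hy1⟩ := oY y0
  obtain ⟨w1, hw1⟩ := oW w0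
  obtain ⟨g1, hg1, e1⟩ := hY y1
  obtain ⟨g2, hg2, e2⟩ := hW w1
  refine ⟨X g1, y0, w0, fun a ha => ?_⟩
  have a1 := hyw a ha
  have a2 := hyw g1 hg1
  have a3 := hyw g2 hg2
  have b1 := hno a ha g1 hg1
  have b2 := hno a ha g2 hg2
  have b3 := hno g1 hg1 g2 hg2
  grind

theorem other_two {p : ℕ} [NeZero p] (hp : 3 ≤ p) (u v : ZMod p) : ∃ x, x ≠ u ∧ x ≠ v := by
  by_contra hcon
  push Not at hcon
  have h1 : (Finset.univ : Finset (ZMod p)) ⊆ {u, v} := by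
    intro x _
    by_cases e : x = u
    · simp [e]
    · simp [hcon x e]
  have h2 := Finset.card_le_card h1
  rw [Finset.card_univ, ZMod.card] at h2
  have h3 := Finset.card_le_two (a := u) (b := v)
  omega

theorem center_int {p q r : ℕ} (hp : p.Prime) (hq : q.Prime) (hr : r.Prime)
    (p3 : 3 ≤ p) (q3 : 3 ≤ q) (r3 : 3 ≤ r) (hpq : p ≠ q) (hpr : p ≠ r) (hqr : q ≠ r)
    (A : Finset ℤ)
    (hno : ∀ a ∈ A, ∀ a' ∈ A, (p : ℤ) ∣ a - a' ∨ (q : ℤ) ∣ a - a' ∨ (r : ℤ) ∣ a - a')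
    (hX : ∀ x : ℤ, ∃ a ∈ A, (p : ℤ) ∣ a - x) (hY : ∀ x : ℤ, ∃ a ∈ A, (q : ℤ) ∣ a - x)
    (hW : ∀ x : ℤ, ∃ a ∈ A, (r : ℤ) ∣ a - x) :
    ∃ c : ℤ, ∀ a ∈ A, ((p : ℤ) ∣ a - c ∧ (q : ℤ) ∣ a - c) ∨ ((p : ℤ) ∣ a - c ∧ (r : ℤ) ∣ a - c) ∨
      ((q : ℤ) ∣ a - c ∧ (r : ℤ) ∣ a - c) := by
  have : NeZero p := ⟨hp.ne_zero⟩
  have : NeZero q := ⟨hq.ne_zero⟩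
  have : NeZero r := ⟨hr.ne_zero⟩
  have conv : ∀ {n : ℕ}, (∀ x : ℤ, ∃ a ∈ A, (n : ℤ) ∣ a - x) →
      ∀ x : ZMod n, ∃ a ∈ A, (a : ZMod n) = x := by
    intro n h x
    obtain ⟨z, rfl⟩ := ZMod.intCast_surjective x
    obtain ⟨a, ha, e⟩ := h z
    exact ⟨a, ha, zeq.2 e⟩
  obtain ⟨c1, c2, c3, H⟩ := center_abs A (fun a => (a : ZMod p)) (fun a => (a : ZMod q))
    (fun a => (a : ZMod r)) (fun a ha a' ha' => by simpa only [zeq] using hno a ha a' ha')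
    (conv hX) (conv hY) (conv hW) (other_two p3)
    (fun u => (other_two q3 u u).imp fun x h => h.1) (fun u => (other_two r3 u u).imp fun x h => h.1)
  obtain ⟨z1, rfl⟩ := ZMod.intCast_surjective c1
  obtain ⟨z2, rfl⟩ := ZMod.intCast_surjective c2
  obtain ⟨z3, rfl⟩ := ZMod.intCast_surjective c3
  obtain ⟨y, hy1, hy2⟩ := crt2 ((Nat.coprime_primes hp hq).2 hpq) z1 z2
  obtain ⟨c, hc1, hc2⟩ := crt2 (p := p * q) (N := r) (Nat.Coprime.mul_left
    ((Nat.coprime_primes hp hr).2 hpr) ((Nat.coprime_primes hq hr).2 hqr)) y z3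
  push_cast at hc1
  have f1 : (c : ZMod p) = z1 := (zeq.2 ((Dvd.intro _ rfl).trans hc1)).trans (zeq.2 hy1)
  have f2 : (c : ZMod q) = z2 := (zeq.2 ((Dvd.intro_left _ rfl).trans hc1)).trans (zeq.2 hy2)
  have f3 : (c : ZMod r) = z3 := zeq.2 hc2
  refine ⟨c, fun a ha => ?_⟩
  have := H a ha
  rw [← f1, ← f2, ← f3] at this
  simpa only [zeq] using this


/-- the configuration with a center -/
structure Cfg (M p q r : ℕ) (A B : Finset ℤ) (c : ℤ) : Prop where
  hp : p.Prime
  hq : q.Prime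
  hr : r.Prime
  p3 : 3 ≤ p
  q3 : 3 ≤ q
  r3 : 3 ≤ r
  hpq : p ≠ q
  hpr : p ≠ r
  hqr : q ≠ r
  hM : M = p ^ 2 * (q ^ 2 * r ^ 2)
  h : TT M A B
  cA : A.card = p * (q * r)
  cB : B.card = p * (q * r)
  sp : ∀ x : ℤ, ∃ a ∈ A, (p : ℤ) ∣ a - x
  sq : ∀ x : ℤ, ∃ a ∈ A, (q : ℤ) ∣ a - x
  sr : ∀ x : ℤ, ∃ a ∈ A, (r : ℤ) ∣ a - x
  two : ∀ a ∈ A, ((p : ℤ) ∣ a - c ∧ (q : ℤ) ∣ a - c) ∨ ((p : ℤ) ∣ a - c ∧ (r : ℤ) ∣ a - c) ∨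
      ((q : ℤ) ∣ a - c ∧ (r : ℤ) ∣ a - c)

theorem Cfg.swap12 {M p q r : ℕ} {A B : Finset ℤ} {c : ℤ} (k : Cfg M p q r A B c) :
    Cfg M q p r A B c where
  hp := k.hq
  hq := k.hp
  hr := k.hr
  p3 := k.q3
  q3 := k.p3
  r3 := k.r3
  hpq := k.hpq.symm
  hpr := k.hqr
  hqr := k.hpr
  hM := by rw [k.hM]; ring
  h := k.h
  cA := by rw [k.cA]; ring
  cB := by rw [k.cB]; ring
  sp := k.sq
  sq := k.sp
  sr := k.sr
  two := fun a ha => by have := k.two a ha; tauto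

theorem Cfg.swap23 {M p q r : ℕ} {A B : Finset ℤ} {c : ℤ} (k : Cfg M p q r A B c) :
    Cfg M p r q A B c where
  hp := k.hp
  hq := k.hr
  hr := k.hq
  p3 := k.p3
  q3 := k.r3
  r3 := k.q3
  hpq := k.hpr
  hpr := k.hpq
  hqr := k.hqr.symm
  hM := by rw [k.hM]; ring
  h := k.h
  cA := by rw [k.cA]; ring
  cB := by rw [k.cB]; ring
  sp := k.sp
  sq := k.sr
  sr := k.sq
  two := fun a ha => by have := k.two a ha; tauto

/-- elements not congruent to `c` -/
def nresc (p : ℕ) (c : ℤ) (A : Finset ℤ) : Finset ℤ := A.filter (fun a => ¬ (p : ℤ) ∣ a - c)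

theorem nresc_card (p : ℕ) (c : ℤ) (A : Finset ℤ) :
    (resc p c A).card + (nresc p c A).card = A.card :=
  Finset.card_filter_add_card_filter_not _

theorem arm_ge {q : ℕ} (hq : q.Prime) {A : Finset ℤ} (hZ : Z (q ^ 2) A)
    (hs : ∀ x : ℤ, ∃ a ∈ A, (q : ℤ) ∣ a - x) (c : ℤ) : (q - 1) * q ≤ (nresc q c A).card := by
  obtain ⟨j0, hj0, hj⟩ := uniq_res q hq.pos c
  have h1 := nresc_card q c A
  rw [resc_congr q c j0 ((hj j0 hj0).2 rfl), ← card_resc q hq.pos A,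
    ← Finset.add_sum_erase _ _ hj0] at h1
  have h2 : (nresc q c A).card = ∑ j ∈ (Finset.range q).erase j0, (resc q (j : ℤ) A).card := by
    omega
  rw [h2]
  have := Finset.card_nsmul_le_sum ((Finset.range q).erase j0)
    (fun j => (resc q (j : ℤ) A).card) q (by
      intro j _
      obtain ⟨a, ha, e⟩ := hs j
      have hpos : 0 < (resc q (j : ℤ) A).card :=
        Finset.card_pos.2 ⟨a, by simp [resc, ha, e]⟩
      rw [← cnt_p2 hq hZ] at hpos ⊢
      exact Nat.le_mul_of_pos_right _ (Nat.pos_of_mul_pos_left hpos))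
  rwa [Finset.card_erase_of_mem hj0, Finset.card_range, smul_eq_mul] at this

theorem num_aux {q r : ℕ} (q3 : 3 ≤ q) (r3 : 3 ≤ r) : ¬ (q - 1) * q + (r - 1) * r ≤ q * r := by
  obtain ⟨a, rfl⟩ := Nat.exists_eq_add_of_le q3
  obtain ⟨b, rfl⟩ := Nat.exists_eq_add_of_le r3
  have e1 : 3 + a - 1 = 2 + a := by omega
  have e2 : 3 + b - 1 = 2 + b := by omega
  rw [e1, e2]
  zify
  nlinarith [sq_nonneg ((a : ℤ) - b), sq_nonneg (a : ℤ), sq_nonneg (b : ℤ)]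

theorem Z_both_dvd {p : ℕ} (hp : p.Prime) {A : Finset ℤ} (h1 : Z p A) (h2 : Z (p ^ 2) A) :
    p ^ 2 ∣ A.card := by
  have e1 := cnt_p hp h1 0
  rw [← cnt_p2 hp h2 0] at e1
  exact ⟨(resc (p ^ 2) 0 A).card, by rw [← e1]; ring⟩

namespace Cfg

variable {M p q r : ℕ} {A B : Finset ℤ} {c : ℤ}

theorem nz (k : Cfg M p q r A B c) : NeZero M :=
  ⟨by rw [k.hM]; exact mul_ne_zero (pow_ne_zero _ k.hp.ne_zero)
        (mul_ne_zero (pow_ne_zero _ k.hq.ne_zero) (pow_ne_zero _ k.hr.ne_zero))⟩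

theorem cop (k : Cfg M p q r A B c) : Nat.Coprime p (q * r) :=
  Nat.Coprime.mul_right ((Nat.coprime_primes k.hp k.hq).2 k.hpq)
    ((Nat.coprime_primes k.hp k.hr).2 k.hpr)

theorem nsq (k : Cfg M p q r A B c) : ¬ p ^ 2 ∣ p * (q * r) := by
  rw [pow_two]
  intro hh
  exact (Nat.Prime.coprime_iff_not_dvd k.hp).1 k.cop ((Nat.mul_dvd_mul_iff_left k.hp.pos).1 hh)

theorem Zp2_of_not (k : Cfg M p q r A B c) (hn : ¬ Z p A) : Z p B ∧ Z (p ^ 2) A := by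
  have := k.nz
  have d2 : p ^ 2 ∣ M := k.hM ▸ dvd_mul_right _ _
  have d1 : p ∣ M := (dvd_pow_self p (by norm_num)).trans d2
  have h1 := (Z_or k.h d1 k.hp.one_lt.ne').resolve_left hn
  have h2 := Z_or k.h d2 (Nat.one_lt_pow (by norm_num) k.hp.one_lt).ne'
  refine ⟨h1, h2.resolve_right fun h3 => k.nsq ?_⟩
  rw [← k.cB]
  exact Z_both_dvd k.hp h1 h3

theorem Zp2_of_notB (k : Cfg M p q r A B c) (hn : Z p A) : ¬ Z (p ^ 2) A := by
  intro h3
  apply k.nsq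
  rw [← k.cA]
  exact Z_both_dvd k.hp hn h3

theorem arms_disj (k : Cfg M p q r A B c) : Disjoint (nresc q c A) (nresc r c A) := by
  rw [Finset.disjoint_left]
  intro a h1 h2
  simp only [nresc, Finset.mem_filter] at h1 h2
  have := k.two a h1.1
  tauto

theorem arms_sub (k : Cfg M p q r A B c) : nresc q c A ∪ nresc r c A ⊆ resc p c A := by
  intro a ha
  simp only [nresc, resc, Finset.mem_union, Finset.mem_filter] at ha ⊢
  have := k.two a (by tauto)
  tauto

theorem arms_le (k : Cfg M p q r A B c) :
    (nresc q c A).card + (nresc r c A).card ≤ (resc p c A).card := by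
  rw [← Finset.card_union_of_disjoint k.arms_disj]
  exact Finset.card_le_card k.arms_sub

theorem not_Zp_aux (k : Cfg M p q r A B c) (hZ : Z p A) : ¬ Z q A := by
  intro hq
  have h1 := cnt_p k.hp hZ c
  have h2 := cnt_p k.hq hq c
  have h3 := nresc_card q c A
  have h4 := k.arms_le
  have h5 : (resc p c A).card = q * r :=
    Nat.eq_of_mul_eq_mul_left k.hp.pos (h1.trans k.cA)
  have h6 : (resc q c A).card = p * r :=
    Nat.eq_of_mul_eq_mul_left k.hq.pos (h2.trans (by rw [k.cA]; ring))
  rw [k.cA, h6] at h3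
  rw [h5] at h4
  have h7 : p * (q * r) ≤ q * r + p * r := by omega
  have h8 : (p * q) * r ≤ (q + p) * r := by nlinarith
  have h9 := Nat.le_of_mul_le_mul_right h8 k.hr.pos
  have := k.p3
  have := k.q3
  nlinarith

theorem not_Zp (k : Cfg M p q r A B c) : ¬ Z p A := by
  intro hZ
  have h1 := k.not_Zp_aux hZ
  have h2 := k.swap23.not_Zp_aux hZ
  have z1 := (k.swap12.Zp2_of_not h1).2
  have z2 := (k.swap23.swap12.Zp2_of_not h2).2
  have g1 := arm_ge k.hq z1 k.sq c
  have g2 := arm_ge k.hr z2 k.sr c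
  have g3 := k.arms_le
  have h5 : (resc p c A).card = q * r :=
    Nat.eq_of_mul_eq_mul_left k.hp.pos ((cnt_p k.hp hZ c).trans k.cA)
  exact num_aux k.q3 k.r3 (by omega)

theorem ZB (k : Cfg M p q r A B c) : Z p B := (k.Zp2_of_not k.not_Zp).1

theorem ZA (k : Cfg M p q r A B c) : Z (p ^ 2) A := (k.Zp2_of_not k.not_Zp).2

theorem ne_of_surj {p : ℕ} (hp : p.Prime) {A : Finset ℤ} (hs : ∀ x : ℤ, ∃ a ∈ A, (p : ℤ) ∣ a - x)
    (c : ℤ) : ∃ a ∈ A, ¬ (p : ℤ) ∣ a - c := by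
  obtain ⟨a, ha, e⟩ := hs (c + 1)
  refine ⟨a, ha, fun e2 => hp.one_lt.ne' ?_⟩
  have : (p : ℤ) ∣ 1 := dvc (dvd_sub e2 e) (by ring)
  have : p ∣ 1 := by exact_mod_cast this
  exact Nat.dvd_one.1 this

/-- the difference pattern `001` occurs in `A` -/
theorem pat (k : Cfg M p q r A B c) : ∃ a ∈ A, ∃ a' ∈ A, ¬ (p : ℤ) ∣ a - a' ∧ ¬ (q : ℤ) ∣ a - a' ∧
    (r : ℤ) ∣ a - a' ∧ ¬ (r : ℤ) ^ 2 ∣ a - a' := by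
  by_contra hcon
  push Not at hcon
  have hprs := k.hr
  have hrr : (r : ℤ) ∣ (r : ℤ) ^ 2 := Dvd.intro_left (r : ℤ) (by ring)
  have cross : ∀ a ∈ A, ∀ a' ∈ A, ¬ (p : ℤ) ∣ a - c → ¬ (q : ℤ) ∣ a' - c →
      (r : ℤ) ^ 2 ∣ a - a' := by
    intro a ha a' ha' h1 h2
    have t1 := k.two a ha
    have t2 := k.two a' ha'
    have u1 : (q : ℤ) ∣ a - c ∧ (r : ℤ) ∣ a - c := by tauto
    have u2 : (p : ℤ) ∣ a' - c ∧ (r : ℤ) ∣ a' - c := by tauto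
    refine hcon a ha a' ha' (fun e => h1 ?_) (fun e => h2 ?_) ?_
    · exact dvc (dvd_add e u2.1) (by ring)
    · exact dvc (dvd_sub u1.1 e) (by ring)
    · exact dvc (dvd_sub u1.2 u2.2) (by ring)
  obtain ⟨a0, ha0, na0⟩ := ne_of_surj k.hp k.sp c
  obtain ⟨b0, hb0, nb0⟩ := ne_of_surj k.hq k.sq c
  have hab := cross a0 ha0 b0 hb0 na0 nb0
  have l1 : nresc p c A ∪ nresc q c A ⊆ resc (r ^ 2) a0 A := by
    intro a ha
    simp only [nresc, resc, Finset.mem_union, Finset.mem_filter] at ha ⊢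
    push_cast
    rcases ha with ⟨m, n⟩ | ⟨m, n⟩
    · exact ⟨m, dvc (dvd_sub (cross a m b0 hb0 n nb0) hab) (by ring)⟩
    · exact ⟨m, dvc (dvd_neg.2 (cross a0 ha0 a m na0 n)) (by ring)⟩
  have l2 : (nresc p c A).card + (nresc q c A).card ≤ (resc (r ^ 2) a0 A).card := by
    rw [← Finset.card_union_of_disjoint k.swap23.swap12.arms_disj]
    exact Finset.card_le_card l1
  have hZr := k.swap23.swap12.ZA
  have l3 : (resc (r ^ 2) a0 A).card = (resc (r ^ 2) (a0 + r) A).card := by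
    apply Nat.eq_of_mul_eq_mul_left k.hr.pos
    rw [cnt_p2 k.hr hZr, cnt_p2 k.hr hZr, resc_congr r a0 (a0 + r) (by simp)]
  have hr2 : ¬ (r : ℤ) ^ 2 ∣ (r : ℤ) := by
    intro e
    have e' : r ^ 2 ∣ r := by exact_mod_cast e
    have := Nat.le_of_dvd k.hr.pos e'
    have := k.r3
    nlinarith
  have l4 : ∀ a ∈ resc (r ^ 2) (a0 + r) A, a ∈ A ∧ (p : ℤ) ∣ a - c ∧ (q : ℤ) ∣ a - c ∧
      (r : ℤ) ^ 2 ∣ a - (a0 + r) := by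
    intro a ha
    simp only [resc, Finset.mem_filter] at ha
    push_cast at ha
    obtain ⟨m, e⟩ := ha
    refine ⟨m, ?_, ?_, e⟩
    · by_contra n
      have := l1 (Finset.mem_union_left _ (Finset.mem_filter.2 ⟨m, n⟩))
      simp only [resc, Finset.mem_filter] at this
      push_cast at this
      exact hr2 (dvc (dvd_sub this.2 e) (by ring))
    · by_contra n
      have := l1 (Finset.mem_union_right _ (Finset.mem_filter.2 ⟨m, n⟩))
      simp only [resc, Finset.mem_filter] at this
      push_cast at this
      exact hr2 (dvc (dvd_sub this.2 e) (by ring))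
  have hp0 : (p : ℤ) ≠ 0 := by exact_mod_cast k.hp.ne_zero
  have hq0 : (q : ℤ) ≠ 0 := by exact_mod_cast k.hq.ne_zero
  have : NeZero p := ⟨k.hp.ne_zero⟩
  have : NeZero q := ⟨k.hq.ne_zero⟩
  have l5 : (resc (r ^ 2) (a0 + r) A).card ≤ p * q := by
    have := Finset.card_le_card_of_injOn (s := resc (r ^ 2) (a0 + r) A)
      (t := (Finset.univ : Finset (ZMod p × ZMod q)))
      (fun a => ((((a - c) / p : ℤ) : ZMod p), (((a - c) / q : ℤ) : ZMod q)))
      (by intro a _; simp) (by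
        intro a ha a' ha' e
        obtain ⟨m, ⟨x, hx⟩, ⟨y, hy⟩, e1⟩ := l4 a ha
        obtain ⟨m', ⟨x', hx'⟩, ⟨y', hy'⟩, e1'⟩ := l4 a' ha'
        simp only [Prod.mk.injEq, zeq] at e
        have e2 : (p : ℤ) ∣ x - x' := by
          have := e.1
          rwa [hx, hx', Int.mul_ediv_cancel_left _ hp0, Int.mul_ediv_cancel_left _ hp0] at this
        have e3 : (q : ℤ) ∣ y - y' := by
          have := e.2
          rwa [hy, hy', Int.mul_ediv_cancel_left _ hq0, Int.mul_ediv_cancel_left _ hq0] at this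
        have f1 : (p : ℤ) ^ 2 ∣ a - a' :=
          dvc (mul_dvd_mul_left (p : ℤ) e2 |> fun z => (pow_two (p : ℤ)).symm ▸ z)
            (by linear_combination hx - hx')
        have f2 : (q : ℤ) ^ 2 ∣ a - a' :=
          dvc (mul_dvd_mul_left (q : ℤ) e3 |> fun z => (pow_two (q : ℤ)).symm ▸ z)
            (by linear_combination hy - hy')
        have f3 : (r : ℤ) ^ 2 ∣ a - a' := dvc (dvd_sub e1 e1') (by ring)
        have cqr : Nat.Coprime q (r ^ 2) :=
          Nat.Coprime.pow_right 2 ((Nat.coprime_primes k.hq k.hr).2 k.hqr)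
        have f4 : ((q ^ 2 * r ^ 2 : ℕ) : ℤ) ∣ a - a' :=
          dvd_sq_mul rfl cqr f2 (by push_cast; exact f3)
        have cp : Nat.Coprime p (q ^ 2 * r ^ 2) := Nat.Coprime.mul_right
          (Nat.Coprime.pow_right 2 ((Nat.coprime_primes k.hp k.hq).2 k.hpq))
          (Nat.Coprime.pow_right 2 ((Nat.coprime_primes k.hp k.hr).2 k.hpr))
        have f5 : (M : ℤ) ∣ a - a' := dvd_sq_mul k.hM cp f1 f4
        have hBne : B.Nonempty := by
          rw [← Finset.card_pos, k.cB]
          exact Nat.mul_pos k.hp.pos (Nat.mul_pos k.hq.pos k.hr.pos)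
        obtain ⟨b, hb⟩ := hBne
        exact (k.h.2 a m a' m' b hb b hb (dvc f5 (by ring))).1)
    rwa [Finset.card_univ, Fintype.card_prod, ZMod.card, ZMod.card] at this
  have g1 := arm_ge k.hp k.ZA k.sp c
  have g2 := arm_ge k.hq k.swap12.ZA k.sq c
  exact num_aux k.p3 k.q3 (by omega)

theorem patB (k : Cfg M p q r A B c) {b b' : ℤ} (hb : b ∈ B) (hb' : b' ∈ B)
    (h1 : (r : ℤ) ∣ b - b') (h2 : ¬ (r : ℤ) ^ 2 ∣ b - b') :
    (p : ℤ) ∣ b - b' ∨ (q : ℤ) ∣ b - b' := by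
  have := k.nz
  by_contra hcon
  push Not at hcon
  obtain ⟨a, ha, a', ha', n1, n2, n3, n4⟩ := k.pat
  have := k.h.sands ha ha' hb hb' (by
    rw [k.hM]
    refine gcd_mul_eq _ _ ?_ _ _ (gcd_sq_not k.hp n1 hcon.1) (gcd_mul_eq _ _ ?_ _ _
      (gcd_sq_not k.hq n2 hcon.2) (gcd_sq_eq r k.hr _ _ (by simp [h1, n3]) (by simp [h2, n4])))
    · exact Nat.Coprime.mul_right
          (Nat.Coprime.pow 2 2 ((Nat.coprime_primes k.hp k.hq).2 k.hpq))
          (Nat.Coprime.pow 2 2 ((Nat.coprime_primes k.hp k.hr).2 k.hpr))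
    · exact Nat.Coprime.pow 2 2 ((Nat.coprime_primes k.hq k.hr).2 k.hqr))
  exact n1 (by simp [this.1])

theorem not_two (k : Cfg M p q r A B c) : ¬ (Z (p * q) A ∧ Z (p * r) A) := by
  rintro ⟨z1, z2⟩
  have nd : ∀ {l : ℕ}, l.Prime → ∀ a : ℤ, (l : ℤ) ∣ a - (c + 1) → ¬ (l : ℤ) ∣ a - c := by
    intro l hl a h1 h2
    have : (l : ℤ) ∣ 1 := dvc (dvd_sub h2 h1) (by ring)
    have : l ∣ 1 := by exact_mod_cast this
    exact hl.one_lt.ne' (Nat.dvd_one.1 this)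
  have e1 := cnt_pq' k.hp k.hq k.hpq z1 (c + 1)
  have e2 := cnt_pq' k.hp k.hr k.hpr z2 (c + 1)
  have em1 : resc (p * q) (c + 1) A = ∅ := by
    rw [resc, Finset.filter_eq_empty_iff]
    intro a ha hd
    push_cast at hd
    have d1 := nd k.hp a ((Dvd.intro _ rfl).trans hd)
    have d2 := nd k.hq a ((Dvd.intro_left _ rfl).trans hd)
    have := k.two a ha
    tauto
  have em2 : resc (p * r) (c + 1) A = ∅ := by
    rw [resc, Finset.filter_eq_empty_iff]
    intro a ha hd
    push_cast at hd
    have d1 := nd k.hp a ((Dvd.intro _ rfl).trans hd)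
    have d2 := nd k.hr a ((Dvd.intro_left _ rfl).trans hd)
    have := k.two a ha
    tauto
  rw [em1, Finset.card_empty, mul_zero, zero_add, k.cA] at e1
  rw [em2, Finset.card_empty, mul_zero, zero_add, k.cA] at e2
  obtain ⟨α, hα⟩ : ∃ α, α = (resc p (c + 1) A).card := ⟨_, rfl⟩
  rw [← hα] at e1 e2
  have dp : p ∣ α := by rw [hα, ← cnt_p2 k.hp k.ZA]; exact dvd_mul_right _ _
  have cpq := (Nat.coprime_primes k.hp k.hq).2 k.hpq
  have cpr := (Nat.coprime_primes k.hp k.hr).2 k.hpr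
  have cqr := (Nat.coprime_primes k.hq k.hr).2 k.hqr
  have dq : q ∣ α := by
    have h1 : q ∣ p * α := by
      rw [← Nat.dvd_add_left (dvd_mul_right q _), ← e1]
      exact ⟨p * r, by ring⟩
    exact cpq.symm.dvd_of_dvd_mul_left h1
  have dr : r ∣ α := by
    have h1 : r ∣ p * α := by
      rw [← Nat.dvd_add_left (dvd_mul_right r _), ← e2]
      exact ⟨p * q, by ring⟩
    exact cpr.symm.dvd_of_dvd_mul_left h1
  have dall : p * (q * r) ∣ α :=
    Nat.Coprime.mul_dvd_of_dvd_of_dvd k.cop dp (Nat.Coprime.mul_dvd_of_dvd_of_dvd cqr dq dr)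
  have hpos : 0 < α := by
    obtain ⟨a, ha, e⟩ := k.sp (c + 1)
    rw [hα]
    exact Finset.card_pos.2 ⟨a, by simp [resc, ha, e]⟩
  have hle := Nat.le_of_dvd hpos dall
  have h3 : p * α ≤ p * (q * r) := by omega
  have := k.p3
  nlinarith

theorem num2 {p q : ℕ} (p3 : 3 ≤ p) (q3 : 3 ≤ q) (h : p ≠ q) : ¬ p * q ≤ q + (p + p) := by
  intro hh
  rcases Nat.lt_or_ge 3 p with h1 | h1
  · nlinarith
  · have : p = 3 := by omega
    subst this
    omega

theorem uni (k : Cfg M p q r A B c) (z1 : Z (p * r) B) (z2 : Z (q * r) B) {b1 b2 : ℤ}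
    (h1 : b1 ∈ B) (h2 : b2 ∈ B) (hr : (r : ℤ) ∣ b1 - b2) (hr2 : ¬ (r : ℤ) ^ 2 ∣ b1 - b2)
    (hp : (p : ℤ) ∣ b1 - b2) : False := by
  have Zp := k.ZB
  have Zq := k.swap12.ZB
  have Zr := k.swap23.swap12.ZB
  have u1 : (resc r b1 B).card = p * q :=
    Nat.eq_of_mul_eq_mul_left k.hr.pos ((cnt_p k.hr Zr b1).trans (by rw [k.cB]; ring))
  have u2 : (resc (p * r) b1 B).card = q :=
    Nat.eq_of_mul_eq_mul_left (Nat.mul_pos k.hp.pos k.hr.pos)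
      ((cnt_pq k.hp k.hr k.hpr Zp Zr z1 b1).trans (by rw [k.cB]; ring))
  have u3 : ∀ t, (resc (q * r) t B).card = p := fun t =>
    Nat.eq_of_mul_eq_mul_left (Nat.mul_pos k.hq.pos k.hr.pos)
      ((cnt_pq k.hq k.hr k.hqr Zq Zr z2 t).trans (by rw [k.cB]; ring))
  have mk : ∀ {l : ℕ}, l.Prime → l ≠ r → ∀ b ∈ B, ∀ t : ℤ, (l : ℤ) ∣ b - t → (r : ℤ) ∣ b - t →
      b ∈ resc (l * r) t B := by
    intro l hl hlr b hb t e1 e2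
    simp only [resc, Finset.mem_filter]
    refine ⟨hb, ?_⟩
    push_cast
    exact IsCoprime.mul_dvd (Nat.isCoprime_iff_coprime.2 ((Nat.coprime_primes hl k.hr).2 hlr)) e1 e2
  have sub : resc r b1 B ⊆ resc (p * r) b1 B ∪ (resc (q * r) b1 B ∪ resc (q * r) b2 B) := by
    intro b hb
    simp only [resc, Finset.mem_filter] at hb
    obtain ⟨hb, e⟩ := hb
    simp only [Finset.mem_union]
    by_cases hpb : (p : ℤ) ∣ b - b1
    · exact Or.inl (mk k.hp k.hpr b hb b1 hpb e)
    · right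
      by_cases e2 : (r : ℤ) ^ 2 ∣ b - b1
      · right
        have e3 : ¬ (r : ℤ) ^ 2 ∣ b - b2 := fun hh => hr2 (dvc (dvd_sub hh e2) (by ring))
        have e4 : (r : ℤ) ∣ b - b2 := dvc (dvd_add e hr) (by ring)
        have e5 : ¬ (p : ℤ) ∣ b - b2 := fun hh => hpb (dvc (dvd_sub hh hp) (by ring))
        exact mk k.hq k.hqr b hb b2 ((k.patB hb h2 e4 e3).resolve_left e5) e4
      · left
        exact mk k.hq k.hqr b hb b1 ((k.patB hb h1 e e2).resolve_left hpb) e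
  have := (Finset.card_le_card sub).trans ((Finset.card_union_le _ _).trans
    (Nat.add_le_add_left (Finset.card_union_le _ _) _))
  rw [u1, u2, u3, u3] at this
  exact num2 k.p3 k.q3 k.hpq this

theorem ht (k : Cfg M p q r A B c) (z1 : Z (p * r) B) (z2 : Z (q * r) B) :
    Red r (p ^ 2 * q ^ 2) A B := by
  have := k.nz
  have : NeZero (p ^ 2 * q ^ 2) :=
    ⟨mul_ne_zero (pow_ne_zero _ k.hp.ne_zero) (pow_ne_zero _ k.hq.ne_zero)⟩
  have hM : M = r ^ 2 * (p ^ 2 * q ^ 2) := by rw [k.hM]; ring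
  have hc : Nat.Coprime r (p ^ 2 * q ^ 2) := Nat.Coprime.mul_right
    (Nat.Coprime.pow_right 2 ((Nat.coprime_primes k.hr k.hp).2 k.hpr.symm))
    (Nat.Coprime.pow_right 2 ((Nat.coprime_primes k.hr k.hq).2 k.hqr.symm))
  refine red_of_Ht k.hr hM hc k.h ?_ ?_
  · rw [k.cB]; exact ⟨p * q, by ring⟩
  · intro a ha a' ha' b hb b' hb' hN hd
    have hrb : (r : ℤ) ∣ b - b' := by
      rcases k.h.split1 k.hr hM hc ha ha' hb hb' hN with e | e
      · exact dvc (dvd_sub hd e) (by ring)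
      · exact e
    by_contra hn
    rcases k.patB hb hb' hrb hn with e | e
    · exact k.uni z1 z2 hb hb' hrb hn e
    · exact k.swap12.uni z2 z1 hb hb' hrb hn e

theorem orZ (k : Cfg M p q r A B c) : Z (p * q) A ∨ Z (p * q) B := by
  have := k.nz
  refine Z_or k.h ?_ ?_
  · rw [k.hM]; exact ⟨p * q * r ^ 2, by ring⟩
  · intro e; exact k.hp.one_lt.ne' (Nat.eq_one_of_mul_eq_one_right e)

theorem final (k : Cfg M p q r A B c) : T2i M A ∧ T2i M B := by
  have := k.nz
  have R : ∀ {p q r : ℕ}, Cfg M p q r A B c → Z (p * r) B → Z (q * r) B → T2i M A ∧ T2i M B := by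
    intro p q r k z1 z2
    have k' := k.swap23.swap12
    exact T2_three_red k'.hp k'.hq k'.hr k'.hpq k'.hpr k'.hqr k'.hM k'.h k'.cA k'.cB (k.ht z1 z2)
  have o1 := k.orZ
  have o2 := k.swap23.orZ
  have o3 := k.swap12.swap23.orZ
  have n1 := k.not_two
  have n2 := k.swap12.not_two
  have n3 := k.swap23.swap12.not_two
  rw [mul_comm q p] at n2
  rw [mul_comm r p, mul_comm r q] at n3
  by_cases a1 : Z (p * q) A
  · have b2 : Z (p * r) B := by tauto
    have b3 : Z (q * r) B := by tauto
    exact R k b2 b3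
  · have b1 : Z (p * q) B := by tauto
    by_cases a2 : Z (p * r) A
    · have b3 : Z (q * r) B := by tauto
      exact R k.swap23 b1 (by rw [mul_comm]; exact b3)
    · have b2 : Z (p * r) B := by tauto
      exact R k.swap12.swap23 (by rw [mul_comm]; exact b1) (by rw [mul_comm]; exact b2)

end Cfg


theorem cop_sq {p q r : ℕ} (hp : p.Prime) (hq : q.Prime) (hr : r.Prime) (hpq : p ≠ q)
    (hpr : p ≠ r) : Nat.Coprime p (q ^ 2 * r ^ 2) :=
  Nat.Coprime.mul_right (Nat.Coprime.pow_right 2 ((Nat.coprime_primes hp hq).2 hpq))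
    (Nat.Coprime.pow_right 2 ((Nat.coprime_primes hp hr).2 hpr))

theorem T2_of_Hs {M p q r : ℕ} [NeZero M] (hp : p.Prime) (hq : q.Prime) (hr : r.Prime)
    (hpq : p ≠ q) (hpr : p ≠ r) (hqr : q ≠ r)
    (hM : M = p ^ 2 * (q ^ 2 * r ^ 2)) {A B : Finset ℤ} (h : TT M A B)
    (hA : A.card = p * (q * r)) (hB : B.card = p * (q * r)) (H : Hs p (q ^ 2 * r ^ 2) A B) :
    T2i M A ∧ T2i M B := by
  have : NeZero (q ^ 2 * r ^ 2) :=
    ⟨mul_ne_zero (pow_ne_zero _ hq.ne_zero) (pow_ne_zero _ hr.ne_zero)⟩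
  exact T2_three_red hp hq hr hpq hpr hqr hM h hA hB
    (red_of_Hs hp hM (cop_sq hp hq hr hpq hpr) h ⟨_, hA⟩ H)

theorem T2_three_no {M p q r : ℕ} [NeZero M] (hp : p.Prime) (hq : q.Prime) (hr : r.Prime)
    (p3 : 3 ≤ p) (q3 : 3 ≤ q) (r3 : 3 ≤ r)
    (hpq : p ≠ q) (hpr : p ≠ r) (hqr : q ≠ r)
    (hM : M = p ^ 2 * (q ^ 2 * r ^ 2)) {A B : Finset ℤ} (h : TT M A B)
    (hA : A.card = p * (q * r)) (hB : B.card = p * (q * r))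
    (hno : ∀ a ∈ A, ∀ a' ∈ A, (p : ℤ) ∣ a - a' ∨ (q : ℤ) ∣ a - a' ∨ (r : ℤ) ∣ a - a') :
    T2i M A ∧ T2i M B := by
  have hM2 : M = q ^ 2 * (p ^ 2 * r ^ 2) := by rw [hM]; ring
  have hM3 : M = r ^ 2 * (p ^ 2 * q ^ 2) := by rw [hM]; ring
  by_cases H1 : Hs p (q ^ 2 * r ^ 2) A B
  · exact T2_of_Hs hp hq hr hpq hpr hqr hM h hA hB H1
  by_cases H2 : Hs q (p ^ 2 * r ^ 2) A B
  · exact T2_of_Hs hq hp hr hpq.symm hqr hpr hM2 h (by rw [hA]; ring) (by rw [hB]; ring) H2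
  by_cases H3 : Hs r (p ^ 2 * q ^ 2) A B
  · exact T2_of_Hs hr hp hq hpr.symm hqr.symm hpq hM3 h (by rw [hA]; ring) (by rw [hB]; ring) H3
  have sp := surj_of_not_Hs hp hM (cop_sq hp hq hr hpq hpr) h H1
  have sq := surj_of_not_Hs hq hM2 (cop_sq hq hp hr hpq.symm hqr) h H2
  have sr := surj_of_not_Hs hr hM3 (cop_sq hr hp hq hpr.symm hqr.symm) h H3
  obtain ⟨c, hc⟩ := center_int hp hq hr p3 q3 r3 hpq hpr hqr A hno sp sq sr
  exact Cfg.final ⟨hp, hq, hr, p3, q3, r3, hpq, hpr, hqr, hM, h, hA, hB, sp, sq, sr, hc⟩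

theorem T2_three {M p q r : ℕ} [NeZero M] (hp : p.Prime) (hq : q.Prime) (hr : r.Prime)
    (p3 : 3 ≤ p) (q3 : 3 ≤ q) (r3 : 3 ≤ r)
    (hpq : p ≠ q) (hpr : p ≠ r) (hqr : q ≠ r)
    (hM : M = p ^ 2 * (q ^ 2 * r ^ 2)) {A B : Finset ℤ} (h : TT M A B)
    (hA : A.card = p * (q * r)) (hB : B.card = p * (q * r)) :
    T2i M A ∧ T2i M B := by
  by_cases hno : ∀ a ∈ A, ∀ a' ∈ A, (p : ℤ) ∣ a - a' ∨ (q : ℤ) ∣ a - a' ∨ (r : ℤ) ∣ a - a'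
  · exact T2_three_no hp hq hr p3 q3 r3 hpq hpr hqr hM h hA hB hno
  · push Not at hno
    obtain ⟨a, ha, a', ha', n1, n2, n3⟩ := hno
    refine (T2_three_no hp hq hr p3 q3 r3 hpq hpr hqr hM h.symm hB hA ?_).symm
    intro b hb b' hb'
    by_contra hcon
    push Not at hcon
    obtain ⟨m1, m2, m3⟩ := hcon
    have e := h.sands ha ha' hb hb' (by
      rw [hM]
      exact gcd_mul_eq _ _ (Nat.Coprime.pow_left 2 (cop_sq hp hq hr hpq hpr)) _ _
        (gcd_sq_not hp n1 m1) (gcd_mul_eq _ _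
          (Nat.Coprime.pow _ _ ((Nat.coprime_primes hq hr).2 hqr)) _ _
          (gcd_sq_not hq n2 m2) (gcd_sq_not hr n3 m3)))
    exact n1 (by rw [e.1]; simp)


/-- integer representatives -/
noncomputable def reps (M : ℕ) (A : Finset (ZMod M)) : Finset ℤ :=
  A.image (fun a => (a.val : ℤ))

theorem reps_inj (M : ℕ) [NeZero M] : Function.Injective (fun a : ZMod M => (a.val : ℤ)) := by
  intro a b e
  exact ZMod.val_injective M (Int.ofNat.inj e)

theorem reps_card (M : ℕ) [NeZero M] (A : Finset (ZMod M)) : (reps M A).card = A.card :=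
  Finset.card_image_of_injective _ (reps_inj M)

theorem cycDvd_iff {M s : ℕ} [NeZero M] (hs : 0 < s) (A : Finset (ZMod M)) :
    cycDvd M s A ↔ Z s (reps M A) := by
  have key : ∀ ζ : ℂ, aeval ζ (maskPoly M A) = ∑ a ∈ reps M A, ζ ^ a := by
    intro ζ
    unfold maskPoly reps
    rw [Finset.sum_image (fun a _ b _ e => reps_inj M e), map_sum]
    refine Finset.sum_congr rfl fun a _ => ?_
    rw [map_pow, aeval_X, zpow_natCast]
  unfold cycDvd
  obtain ⟨ζ, hζ⟩ := exists_prim s hs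
  constructor
  · intro h
    exact Z_of_one hs hζ (by rw [← key]; exact (cyc_iff hs _ hζ).1 h)
  · intro h
    exact (cyc_iff hs _ hζ).2 (by rw [key]; exact h ζ hζ)

theorem T2_conv {M : ℕ} [NeZero M] (A : Finset (ZMod M)) (h : T2i M (reps M A)) :
    SatisfiesT2 M A := by
  intro P e hP H
  have hpos : ∀ p ∈ P, 0 < p ^ e p := fun p hp => pow_pos (H p hp).1.pos _
  have hm : 0 < ∏ p ∈ P, p ^ e p := Finset.prod_pos hpos
  rw [cycDvd_iff hm]
  apply h
  · apply Finset.prod_dvd_of_isRelPrime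
    · intro a ha b hb hab
      exact Nat.coprime_iff_isRelPrime.1
        (Nat.Coprime.pow _ _ ((Nat.coprime_primes (H a ha).1 (H b hb).1).2 hab))
    · exact fun p hp => (H p hp).2.2.1
  · obtain ⟨p, hp⟩ := hP
    intro h1
    have h2 : p ∣ 1 := by
      rw [← h1]
      exact (dvd_pow_self p (by have := (H p hp).2.1; omega)).trans (Finset.dvd_prod_of_mem _ hp)
    exact (H p hp).1.one_lt.ne' (Nat.dvd_one.1 h2)
  · intro l hl hd
    obtain ⟨p, hp, hlp⟩ := (Prime.dvd_finsetProd_iff hl.prime _).1 hd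
    have hlp' : l = p := (Nat.prime_dvd_prime_iff_eq hl (H p hp).1).1 (hl.dvd_of_dvd_pow hlp)
    subst hlp'
    have hf : (∏ p ∈ P, p ^ e p).factorization l = e l := by
      rw [Nat.factorization_prod (fun p hp => (hpos p hp).ne'), Finsupp.finsetSum_apply,
        Finset.sum_eq_single l]
      · rw [hl.factorization_pow]; simp
      · intro b hb hbl
        rw [(H b hb).1.factorization_pow]; simp [hbl]
      · intro h; exact absurd hp h
    rw [hf]
    exact (cycDvd_iff (hpos l hp) A).1 (H l hp).2.2.2

theorem TT_of_tiling {M : ℕ} [NeZero M] {A B : Finset (ZMod M)}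
    (h : IsTiling M (A : Set (ZMod M)) (B : Set (ZMod M))) (hc : A.card * B.card = M) :
    TT M (reps M A) (reps M B) := by
  refine ⟨by rw [reps_card, reps_card, hc], ?_⟩
  intro a ha a' ha' b hb b' hb' hd
  simp only [reps, Finset.mem_image] at ha ha' hb hb'
  obtain ⟨x, hx, rfl⟩ := ha
  obtain ⟨x', hx', rfl⟩ := ha'
  obtain ⟨y, hy, rfl⟩ := hb
  obtain ⟨y', hy', rfl⟩ := hb'
  have e := (zeq (n := M)).2 hd
  push_cast at e
  simp only [ZMod.natCast_zmod_val] at e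
  have := (h (x' + y')).unique (y₁ := (x, y)) (y₂ := (x', y')) ⟨hx, hy, e⟩ ⟨hx', hy', rfl⟩
  simp only [Prod.mk.injEq] at this
  rw [this.1, this.2]
  exact ⟨rfl, rfl⟩

/-- If `M = p_i² p_j² p_k²` with `p_i, p_j, p_k` distinct odd primes,
`A ⊕ B = ℤ_M` and `|A| = |B| = p_i p_j p_k`, then both `A` and `B` satisfy (T2). -/
theorem statement0
    (pi pj pk : ℕ) (hpi : pi.Prime) (hpj : pj.Prime) (hpk : pk.Prime)
    (hoi : Odd pi) (hoj : Odd pj) (hok : Odd pk)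
    (hij : pi ≠ pj) (hik : pi ≠ pk) (hjk : pj ≠ pk)
    (M : ℕ) (hM : M = pi ^ 2 * pj ^ 2 * pk ^ 2)
    (A B : Finset (ZMod M))
    (htile : IsTiling M (A : Set (ZMod M)) (B : Set (ZMod M)))
    (hcardA : A.card = pi * pj * pk) (hcardB : B.card = pi * pj * pk) :
    SatisfiesT2 M A ∧ SatisfiesT2 M B := by
  have h3 : ∀ p : ℕ, p.Prime → Odd p → 3 ≤ p := by
    intro p hp ho
    have := hp.two_le
    obtain ⟨k, hk⟩ := ho
    omega
  have hM' : M = pi ^ 2 * (pj ^ 2 * pk ^ 2) := by rw [hM]; ring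
  have : NeZero M := ⟨by
    rw [hM]
    exact mul_ne_zero (mul_ne_zero (pow_ne_zero _ hpi.ne_zero) (pow_ne_zero _ hpj.ne_zero))
      (pow_ne_zero _ hpk.ne_zero)⟩
  have h := TT_of_tiling htile (by rw [hcardA, hcardB, hM]; ring)
  have key := T2_three hpi hpj hpk (h3 _ hpi hoi) (h3 _ hpj hoj) (h3 _ hpk hok) hij hik hjk hM' h
    (by rw [reps_card, hcardA, mul_assoc]) (by rw [reps_card, hcardB, mul_assoc])
  exact ⟨T2_conv A key.1, T2_conv B key.2⟩
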